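/- arXiv:hep-lat/0202025 — 7 statements merged into one kernel-verified Lean document; each statement's English description precedes it below -/
import Mathlib

section
/- Let Q be an n×n invertible Hermitian complex matrix and b ∈ ℂⁿ. Define b⁺ = ½(I + sign(Q))b and b⁻ = ½(I − sign(Q))b. For k ≥ 0 let ρ⁺_{k+1} = min{‖p(Q)b⁺‖₂ : p a polynomial of degree ≤ k+1 with p(0) = 1} and ρ⁻_{k+1} = min{‖p(Q)b⁻‖₂ : p a polynomial of degree ≤ k+1 with p(0) = 1} (the GMRES residual norms at step k+1 for the systems Qx = b⁺ and Qx = b⁻ with zero initial guess). Then for every polynomial q_k of degree ≤ k one has ‖sign(Q)b − Q q_k(Q) b‖₂² ≥ (ρ⁺_{k+1})² + (ρ⁻_{k+1})². -/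
/-! Write `S = sign Q` and let `b = u + v` be the decomposition of `b` along the `±1`-eigenspaces of
the involution `S`, so that `S b = u - v`. The error then splits as
`S b - Q q(Q) b = (u - Q q(Q) u) - (v + Q q(Q) v)`. The two brackets stay in these eigenspaces since
`Q` commutes with `S`, hence are orthogonal, and they are the residuals `p(Q) u` and `p(Q) v` of the
polynomials `1 - X q` and `1 + X q`, which compete in the two GMRES minimizations. -/

open Matrix Polynomial

/-- The Euclidean (l2) norm on `ℂⁿ`. -/
noncomputable def e2norm {n : ℕ} (x : Fin n → ℂ) : ℝ :=
  Real.sqrt (∑ i, ‖x i‖ ^ 2)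

section Eigenspace

variable {R M : Type*} [CommRing R] [AddCommGroup M] [Module R M] {S : Module.End R M}

theorem one_add_apply_mem_eigenspace_one (hS : S * S = 1) (x : M) :
    (1 + S) x ∈ S.eigenspace 1 := by
  rw [Module.End.mem_eigenspace_iff, one_smul, ← Module.End.mul_apply, mul_add, hS, mul_one,
    add_comm]

theorem one_sub_apply_mem_eigenspace_neg_one (hS : S * S = 1) (x : M) :
    (1 - S) x ∈ S.eigenspace (-1) := by
  rw [Module.End.mem_eigenspace_iff, neg_one_smul, ← Module.End.mul_apply, mul_sub, hS, mul_one,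
    ← LinearMap.neg_apply, neg_sub]

end Eigenspace

section Residual

variable {R E : Type*} [CommRing R] [SeminormedAddCommGroup E] [Module R E]

/-- The norm of the GMRES residual at step `d` for the system `T x = c` with zero initial guess:
the infimum (attained if `E` is a normed space over `ℝ` or `ℂ`) of `‖p(T) c‖` over the polynomials
`p` of degree at most `d` with `p(0) = 1`. -/
noncomputable def gmresResidual (T : Module.End R E) (d : ℕ) (c : E) : ℝ :=
  sInf {s : ℝ | ∃ p : R[X], p.natDegree ≤ d ∧ p.eval 0 = 1 ∧ s = ‖aeval T p c‖}

theorem gmresResidual_nonneg (T : Module.End R E) (d : ℕ) (c : E) : 0 ≤ gmresResidual T d c :=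
  Real.sInf_nonneg (by rintro _ ⟨p, -, -, rfl⟩; exact norm_nonneg _)

theorem gmresResidual_le_norm_aeval (T : Module.End R E) {d : ℕ} (c : E) {p : R[X]}
    (hp : p.natDegree ≤ d) (hp₀ : p.eval 0 = 1) : gmresResidual T d c ≤ ‖aeval T p c‖ :=
  csInf_le ⟨0, by rintro _ ⟨p, -, -, rfl⟩; exact norm_nonneg _⟩ ⟨p, hp, hp₀, rfl⟩

theorem gmresResidual_succ_le_norm_add (T : Module.End R E) {k : ℕ} (c : E) {q : R[X]}
    (hq : q.natDegree ≤ k) : gmresResidual T (k + 1) c ≤ ‖c + T (aeval T q c)‖ := by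
  have hdeg : (1 + X * q).natDegree ≤ k + 1 := by compute_degree; lia
  simpa using gmresResidual_le_norm_aeval T c hdeg (by simp)

theorem gmresResidual_succ_le_norm_sub (T : Module.End R E) {k : ℕ} (c : E) {q : R[X]}
    (hq : q.natDegree ≤ k) : gmresResidual T (k + 1) c ≤ ‖c - T (aeval T q c)‖ := by
  simpa [← sub_eq_add_neg] using
    gmresResidual_succ_le_norm_add T c ((natDegree_neg q).trans_le hq)

end Residual

section Involution

variable {𝕜 E : Type*} [RCLike 𝕜] [NormedAddCommGroup E] [InnerProductSpace 𝕜 E]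
  {S T : Module.End 𝕜 E}

theorem norm_sub_sq_of_mem_eigenspace_one_neg_one (hS : S.IsSymmetric) {u v : E}
    (hu : u ∈ S.eigenspace 1) (hv : v ∈ S.eigenspace (-1)) :
    ‖u - v‖ ^ 2 = ‖u‖ ^ 2 + ‖v‖ ^ 2 := by
  have huv : inner 𝕜 u v = 0 :=
    hS.orthogonalFamily_eigenspaces.isOrtho (by norm_num) |>.inner_eq hu hv
  rw [norm_sub_sq (𝕜 := 𝕜), huv, map_zero, mul_zero, sub_zero]

theorem gmresResidual_sq_add_sq_le_of_mem_eigenspace (hS : S.IsSymmetric) (hST : Commute S T)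
    {u v : E} (hu : u ∈ S.eigenspace 1) (hv : v ∈ S.eigenspace (-1)) {k : ℕ} {q : 𝕜[X]}
    (hq : q.natDegree ≤ k) :
    gmresResidual T (k + 1) u ^ 2 + gmresResidual T (k + 1) v ^ 2 ≤
      ‖u - v - T (aeval T q (u + v))‖ ^ 2 := by
  have hcomm : Commute S (T * aeval T q) := hST.mul_right <|
    Algebra.commute_of_mem_adjoin_singleton_of_commute (aeval_mem_adjoin_singleton 𝕜 T) hST
  have hu' : u - T (aeval T q u) ∈ S.eigenspace 1 :=
    sub_mem hu (Module.End.mapsTo_genEigenspace_of_comm hcomm 1 1 hu)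
  have hv' : v + T (aeval T q v) ∈ S.eigenspace (-1) :=
    add_mem hv (Module.End.mapsTo_genEigenspace_of_comm hcomm (-1) 1 hv)
  calc gmresResidual T (k + 1) u ^ 2 + gmresResidual T (k + 1) v ^ 2
      ≤ ‖u - T (aeval T q u)‖ ^ 2 + ‖v + T (aeval T q v)‖ ^ 2 := by
        gcongr
        · exact gmresResidual_nonneg T _ u
        · exact gmresResidual_succ_le_norm_sub T u hq
        · exact gmresResidual_nonneg T _ v
        · exact gmresResidual_succ_le_norm_add T v hq
    _ = ‖(u - T (aeval T q u)) - (v + T (aeval T q v))‖ ^ 2 :=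
        (norm_sub_sq_of_mem_eigenspace_one_neg_one hS hu' hv').symm
    _ = ‖u - v - T (aeval T q (u + v))‖ ^ 2 := by
        rw [map_add, map_add]
        congr 2
        abel

theorem lanczos_sign_lower_bound_general (hS : S.IsSymmetric) (hSS : S * S = 1)
    (hST : Commute S T) (b : E) {k : ℕ} {q : 𝕜[X]} (hq : q.natDegree ≤ k) :
    gmresResidual T (k + 1) ((2 : 𝕜)⁻¹ • (1 + S) b) ^ 2 +
        gmresResidual T (k + 1) ((2 : 𝕜)⁻¹ • (1 - S) b) ^ 2 ≤
      ‖S b - T (aeval T q b)‖ ^ 2 := by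
  have hsub : (2 : 𝕜)⁻¹ • (1 + S) b - (2 : 𝕜)⁻¹ • (1 - S) b = S b := by
    simp only [LinearMap.add_apply, LinearMap.sub_apply, Module.End.one_apply]
    module
  have hadd : (2 : 𝕜)⁻¹ • (1 + S) b + (2 : 𝕜)⁻¹ • (1 - S) b = b := by
    simp only [LinearMap.add_apply, LinearMap.sub_apply, Module.End.one_apply]
    module
  simpa only [hsub, hadd] using gmresResidual_sq_add_sq_le_of_mem_eigenspace hS hST
    (Submodule.smul_mem _ (2 : 𝕜)⁻¹ (one_add_apply_mem_eigenspace_one hSS b))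
    (Submodule.smul_mem _ (2 : 𝕜)⁻¹ (one_sub_apply_mem_eigenspace_neg_one hSS b)) hq

end Involution

theorem continuousOn_real_sign : ContinuousOn Real.sign {0}ᶜ := by
  intro x hx
  refine ContinuousAt.continuousWithinAt ?_
  rcases lt_or_gt_of_ne hx with hx | hx
  · exact continuousAt_const.congr
      ((eventually_lt_nhds hx).mono fun y hy ↦ (Real.sign_of_neg hy).symm)
  · exact continuousAt_const.congr
      ((eventually_gt_nhds hx).mono fun y hy ↦ (Real.sign_of_pos hy).symm)

theorem cfc_real_sign_mul_self {A : Type*} [Ring A] [StarRing A] [TopologicalSpace A]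
    [Algebra ℝ A] [ContinuousFunctionalCalculus ℝ A IsSelfAdjoint] {a : A}
    (ha : IsSelfAdjoint a) (hunit : IsUnit a) : cfc Real.sign a * cfc Real.sign a = 1 := by
  have hne : ∀ x ∈ spectrum ℝ a, x ≠ 0 := by
    rintro _ hx rfl
    exact spectrum.zero_notMem ℝ hunit hx
  have hcont : ContinuousOn Real.sign (spectrum ℝ a) := continuousOn_real_sign.mono hne
  rw [← cfc_mul Real.sign Real.sign a, ← cfc_one ℝ a]
  refine cfc_congr fun x hx ↦ ?_
  rcases Real.sign_apply_eq_of_ne_zero x (hne x hx) with h | h <;> simp [h]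

section EuclideanMatrix

variable {n : Type*} [Fintype n] [DecidableEq n]

theorem aeval_toLpLin_toLp {R : Type*} [CommRing R] (r : ENNReal) (A : Matrix n n R) (p : R[X])
    (x : n → R) :
    aeval (toLpLin r r A) p (WithLp.toLp r x) = WithLp.toLp r (aeval A p *ᵥ x) :=
  LinearMap.congr_fun (aeval_algHom_apply (toLpLinAlgEquiv r) A p) (WithLp.toLp r x)

theorem gmresResidual_toEuclideanLin_sq_add_sq_le {𝕜 : Type*} [RCLike 𝕜] {S Q : Matrix n n 𝕜}
    (hS : S.IsHermitian) (hSS : S * S = 1) (hSQ : Commute S Q) (b : n → 𝕜) {k : ℕ} {q : 𝕜[X]}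
    (hq : q.natDegree ≤ k) :
    gmresResidual (toEuclideanLin Q) (k + 1) (WithLp.toLp 2 ((2 : 𝕜)⁻¹ • ((1 + S) *ᵥ b))) ^ 2 +
        gmresResidual (toEuclideanLin Q) (k + 1) (WithLp.toLp 2 ((2 : 𝕜)⁻¹ • ((1 - S) *ᵥ b))) ^ 2 ≤
      ‖WithLp.toLp 2 (S *ᵥ b - Q *ᵥ (aeval Q q *ᵥ b))‖ ^ 2 := by
  have hSS' : toEuclideanLin S * toEuclideanLin S = 1 := by
    rw [Module.End.mul_eq_comp, ← toLpLin_mul_same, hSS, toLpLin_one, Module.End.one_eq_id]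
  have hSQ' : Commute (toEuclideanLin S) (toEuclideanLin Q) := hSQ.map (toLpLinAlgEquiv 2)
  simpa [aeval_toLpLin_toLp, add_mulVec, sub_mulVec] using lanczos_sign_lower_bound_general
    (isSymmetric_toEuclideanLin_iff.2 hS) hSS' hSQ' (WithLp.toLp 2 b) hq

end EuclideanMatrix

theorem e2norm_eq_norm_toLp {n : ℕ} (x : Fin n → ℂ) : e2norm x = ‖WithLp.toLp 2 x‖ :=
  (EuclideanSpace.norm_eq _).symm

theorem gmresResidual_toEuclideanLin {n : ℕ} (Q : Matrix (Fin n) (Fin n) ℂ) (d : ℕ)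
    (c : Fin n → ℂ) :
    gmresResidual (toEuclideanLin Q) d (WithLp.toLp 2 c) =
      sInf {s : ℝ | ∃ p : ℂ[X], p.natDegree ≤ d ∧ p.eval 0 = 1 ∧
        s = e2norm (aeval Q p *ᵥ c)} := by
  simp only [gmresResidual, aeval_toLpLin_toLp, e2norm_eq_norm_toLp]

/-- For an invertible Hermitian `Q`, with `sign Q` the matrix sign function
(defined via the functional calculus), `b⁺ = ½(I + sign Q)b`, `b⁻ = ½(I - sign Q)b`, and
`ρ⁺`, `ρ⁻` the GMRES residual norms at step `k+1` for `Qx = b⁺` resp. `Qx = b⁻`, every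
approximation of the form `Q qₖ(Q) b` with `deg qₖ ≤ k` satisfies
`‖sign(Q)b − Q qₖ(Q) b‖² ≥ (ρ⁺)² + (ρ⁻)²`. -/
theorem lanczos_sign_lower_bound {n : ℕ}
    (Q : Matrix (Fin n) (Fin n) ℂ) (hQ : Q.IsHermitian) (hQinv : IsUnit Q.det)
    (b : Fin n → ℂ) (k : ℕ)
    (signQ : Matrix (Fin n) (Fin n) ℂ) (hsign : signQ = hQ.cfc Real.sign)
    (bp bm : Fin n → ℂ)
    (hbp : bp = (2 : ℂ)⁻¹ • (((1 : Matrix (Fin n) (Fin n) ℂ) + signQ) *ᵥ b))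
    (hbm : bm = (2 : ℂ)⁻¹ • (((1 : Matrix (Fin n) (Fin n) ℂ) - signQ) *ᵥ b))
    (ρp ρm : ℝ)
    (hρp : ρp = sInf {s : ℝ | ∃ p : Polynomial ℂ, p.natDegree ≤ k + 1 ∧ p.eval 0 = 1 ∧
      s = e2norm ((Polynomial.aeval Q p) *ᵥ bp)})
    (hρm : ρm = sInf {s : ℝ | ∃ p : Polynomial ℂ, p.natDegree ≤ k + 1 ∧ p.eval 0 = 1 ∧
      s = e2norm ((Polynomial.aeval Q p) *ᵥ bm)}) :
    ∀ q : Polynomial ℂ, q.natDegree ≤ k →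
      e2norm (signQ *ᵥ b - Q *ᵥ ((Polynomial.aeval Q q) *ᵥ b)) ^ 2 ≥ ρp ^ 2 + ρm ^ 2 := by
  intro q hq
  rw [← hQ.cfc_eq] at hsign
  subst hsign hbp hbm hρp hρm
  have hS : (cfc Real.sign Q).IsHermitian := IsSelfAdjoint.cfc
  have hSS : cfc Real.sign Q * cfc Real.sign Q = 1 :=
    cfc_real_sign_mul_self hQ.isSelfAdjoint ((isUnit_iff_isUnit_det Q).2 hQinv)
  have hSQ : Commute (cfc Real.sign Q) Q := (Commute.refl Q).cfc_real Real.sign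
  simpa only [gmresResidual_toEuclideanLin, e2norm_eq_norm_toLp] using
    gmresResidual_toEuclideanLin_sq_add_sq_le hS hSS hSQ b hq
end

section
/- Let Q be an n×n Hermitian complex matrix all of whose eigenvalues lie in the real interval [α, β], and let b ∈ ℂⁿ. Let μ₁, …, μ_k be k distinct points in [α, β], let f : ℝ → ℝ be k times continuously differentiable on [α, β], let p be the polynomial of degree ≤ k−1 interpolating f at the points μ₁, …, μ_k (i.e. p(μᵢ) = f(μᵢ) for i = 1, …, k), and set q(t) = ∏_{j=1}^{k} (t − μⱼ). Then ‖q(Q)b‖₂ · inf_{t∈[α,β]} |f^{(k)}(t)/k!| ≤ ‖f(Q)b − p(Q)b‖₂ ≤ ‖q(Q)b‖₂ · sup_{t∈[α,β]} |f^{(k)}(t)/k!|. -/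
/-!
For `t` in the interval, choose `c` so that `p + c q` agrees with `f` at `t` as well as at the `k`
nodes. By the generalized Rolle theorem the `k`-th derivative of `f - (p + c q)` vanishes somewhere,
that is `k! c = f⁽ᵏ⁾(ξ)`, and so `f - p` lies between `|q| · inf` and `|q| · sup` in absolute value
on the whole interval, in particular on the spectrum. Such pointwise bounds pass to the functional
calculus of a self-adjoint operator `T`: if `|g| ≤ |h|` on the spectrum, then `h² = g² + r²` for a
continuous `r`, whence `‖h(T) x‖² = ‖g(T) x‖² + ‖r(T) x‖²`.
-/

open Matrix Polynomial

open Finset Lagrange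

section Polynomial

lemma iteratedDeriv_polynomial_eval {𝕜 : Type*} [NontriviallyNormedField 𝕜] (k : ℕ) (r : 𝕜[X]) :
    iteratedDeriv k (fun x => r.eval x) = fun x => (derivative^[k] r).eval x := by
  induction k generalizing r with
  | zero => simp
  | succ k ih =>
    have hderiv : deriv (fun x => r.eval x) = fun x => (derivative r).eval x :=
      funext fun _ => r.deriv
    rw [iteratedDeriv_succ', hderiv, ih, Function.iterate_succ_apply]

lemma iterate_derivative_natDegree {R : Type*} [Semiring R] (r : R[X]) :
    derivative^[r.natDegree] r = C (r.natDegree.factorial * r.leadingCoeff) := by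
  ext (_ | m)
  · simp [coeff_iterate_derivative, Nat.descFactorial_self]
  · rw [coeff_iterate_derivative, coeff_eq_zero_of_natDegree_lt (by lia), smul_zero, coeff_C_succ]

lemma iterate_derivative_nodal {R ι : Type*} [CommRing R] [Nontrivial R] (s : Finset ι)
    (v : ι → R) : derivative^[#s] (nodal s v) = C ((#s).factorial : R) := by
  simpa [nodal_monic.leadingCoeff] using iterate_derivative_natDegree (nodal s v)

end Polynomial

section Interpolation

variable {I : Set ℝ} [I.OrdConnected]

lemma uniqueDiffOn_of_ordConnected_of_nontrivial (hI : I.Nontrivial) : UniqueDiffOn ℝ I :=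
  have hconv : Convex ℝ I := Set.OrdConnected.convex ‹_›
  uniqueDiffOn_convex hconv (hconv.nontrivial_iff_nonempty_interior.1 hI)

lemma exists_derivWithin_eq_zero {g : ℝ → ℝ} (hg : ContinuousOn g I) {x y : ℝ} (hx : x ∈ I)
    (hy : y ∈ I) (hxy : x < y) (hgxy : g x = g y) :
    ∃ w ∈ Set.Ioo x y, derivWithin g I w = 0 := by
  have hsub : Set.Icc x y ⊆ I := Set.Icc_subset I hx hy
  obtain ⟨w, hw, hw0⟩ := exists_deriv_eq_zero hxy (hg.mono hsub) hgxy
  have hwI : I ∈ nhds w := Filter.mem_of_superset (Icc_mem_nhds hw.1 hw.2) hsub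
  exact ⟨w, hw, by rw [derivWithin_of_mem_nhds hwI, hw0]⟩

lemma exists_iteratedDerivWithin_eq_zero {k : ℕ} {g : ℝ → ℝ} (hg : ContDiffOn ℝ k g I)
    {z : Fin (k + 1) → ℝ} (hz : StrictMono z) (hmem : ∀ i, z i ∈ I) (hzero : ∀ i, g (z i) = 0) :
    ∃ ξ ∈ I, iteratedDerivWithin k g I ξ = 0 := by
  induction k generalizing g with
  | zero => exact ⟨z 0, hmem 0, by simpa using hzero 0⟩
  | succ k ih =>
    have hI : UniqueDiffOn ℝ I := uniqueDiffOn_of_ordConnected_of_nontrivial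
      ⟨z 0, hmem 0, z 1, hmem 1, hz.injective.ne (by simp)⟩
    choose w hw hw0 using fun i : Fin (k + 1) =>
      exists_derivWithin_eq_zero hg.continuousOn (hmem i.castSucc) (hmem i.succ)
        (hz Fin.castSucc_lt_succ) (by rw [hzero, hzero])
    have hwmono : StrictMono w := fun i j hij => calc
      w i < z i.succ := (hw i).2
      _ ≤ z j.castSucc := hz.monotone (Fin.succ_le_castSucc_iff.2 hij)
      _ < w j := (hw j).1
    have hwmem : ∀ i, w i ∈ I := fun i =>
      Set.Icc_subset I (hmem _) (hmem _) (Set.Ioo_subset_Icc_self (hw i))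
    rw [iteratedDerivWithin_succ']
    exact ih (hg.derivWithin hI (by norm_cast)) hwmono hwmem hw0

lemma exists_iteratedDerivWithin_eq_eval_iterate_derivative {k : ℕ} {f : ℝ → ℝ}
    (hf : ContDiffOn ℝ k f I) {r : ℝ[X]} {s : Finset ℝ} (hk : k < #s) (hsI : ∀ x ∈ s, x ∈ I)
    (hfr : ∀ x ∈ s, f x = r.eval x) :
    ∃ ξ ∈ I, iteratedDerivWithin k f I ξ = (derivative^[k] r).eval ξ := by
  rcases k.eq_zero_or_pos with rfl | hkpos
  · obtain ⟨x, hx⟩ := card_pos.1 hk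
    exact ⟨x, hsI x hx, by simpa using hfr x hx⟩
  have hI : UniqueDiffOn ℝ I := by
    obtain ⟨x, hx, y, hy, hxy⟩ := one_lt_card.1 (by lia : 1 < #s)
    exact uniqueDiffOn_of_ordConnected_of_nontrivial ⟨x, hsI x hx, y, hsI y hy, hxy⟩
  have hr : ContDiff ℝ k (fun x => r.eval x) := by simpa using r.contDiff_aeval (𝕜 := ℝ) k
  let z := s.orderEmbOfCardLe hk
  have hz : ∀ i, z i ∈ s := s.orderEmbOfCardLe_mem hk
  obtain ⟨ξ, hξ, hzero⟩ := exists_iteratedDerivWithin_eq_zero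
    (g := f - fun x => r.eval x) (hf.sub hr.contDiffOn) z.strictMono (fun i => hsI _ (hz i))
    fun i => sub_eq_zero.2 (hfr _ (hz i))
  refine ⟨ξ, hξ, sub_eq_zero.1 ?_⟩
  rwa [iteratedDerivWithin_sub hξ hI (hf ξ hξ) hr.contDiffAt.contDiffWithinAt,
    iteratedDerivWithin_eq_iteratedDeriv hI hr.contDiffAt hξ,
    iteratedDeriv_polynomial_eval] at hzero

variable {ι : Type*} {s : Finset ι} {v : ι → ℝ} {f : ℝ → ℝ} {p : ℝ[X]}

lemma exists_sub_eval_eq_eval_nodal_mul (hv : Set.InjOn v s) (hvI : ∀ i ∈ s, v i ∈ I)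
    (hf : ContDiffOn ℝ #s f I) (hp : p.degree < #s) (hpf : ∀ i ∈ s, p.eval (v i) = f (v i))
    {t : ℝ} (ht : t ∈ I) :
    ∃ ξ ∈ I, f t - p.eval t =
      (nodal s v).eval t * (iteratedDerivWithin #s f I ξ / (#s).factorial) := by
  classical
  by_cases hnode : t ∈ s.image v
  · obtain ⟨i, hi, rfl⟩ := mem_image.1 hnode
    exact ⟨v i, ht, by simp [eval_nodal_at_node hi, hpf i hi]⟩
  have hqt : (nodal s v).eval t ≠ 0 :=
    eval_nodal_not_at_node fun i hi h => hnode (mem_image.2 ⟨i, hi, h.symm⟩)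
  set c := (f t - p.eval t) / (nodal s v).eval t with hc
  have hcard : #s < #(insert t (s.image v)) := by
    rw [card_insert_of_notMem hnode, card_image_of_injOn hv]
    exact Nat.lt_succ_self _
  obtain ⟨ξ, hξ, hξc⟩ := exists_iteratedDerivWithin_eq_eval_iterate_derivative
    (r := p + C c * nodal s v) hf hcard
    (by simpa [ht] using hvI)
    (by simp +contextual [hc, hqt, hpf, eval_nodal_at_node])
  refine ⟨ξ, hξ, ?_⟩
  have hfac : ((#s).factorial : ℝ) ≠ 0 := by positivity
  rw [iterate_map_add, iterate_derivative_C_mul,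
    iterate_derivative_eq_zero_of_degree_lt hp, iterate_derivative_nodal] at hξc
  simp only [zero_add, eval_mul, eval_C] at hξc
  rw [hξc, mul_div_cancel_right₀ _ hfac, hc, mul_div_cancel₀ _ hqt]

end Interpolation

lemma bddAbove_abs_iteratedDerivWithin_Icc {k : ℕ} {f : ℝ → ℝ} {α β : ℝ}
    (hf : ContDiffOn ℝ k f (Set.Icc α β)) (c : ℝ) :
    BddAbove ((fun t => |iteratedDerivWithin k f (Set.Icc α β) t / c|) '' Set.Icc α β) := by
  rcases lt_or_ge α β with hαβ | hβα
  · refine (isCompact_Icc.image_of_continuousOn ?_).bddAbove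
    exact ((hf.continuousOn_iteratedDerivWithin le_rfl (uniqueDiffOn_Icc hαβ)).div_const c).abs
  · exact ((Set.subsingleton_Icc_of_ge hβα).finite.image _).bddAbove

section FunctionalCalculus

variable {H : Type*} [NormedAddCommGroup H] [InnerProductSpace ℂ H] [CompleteSpace H]

lemma norm_cfc_apply_sq (T : H →L[ℂ] H) {g : ℝ → ℝ} (hg : ContinuousOn g (spectrum ℝ T)) (x : H) :
    ‖cfc g T x‖ ^ 2 = RCLike.re (inner ℂ (cfc (fun t => g t * g t) T x) x) := by
  have hstar : ContinuousLinearMap.adjoint (cfc g T) = cfc g T := cfc_predicate g T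
  rw [ContinuousLinearMap.apply_norm_sq_eq_inner_adjoint_left, hstar, cfc_mul g g T]
  rfl

lemma norm_cfc_apply_le_of_abs_le {T : H →L[ℂ] H} {g h : ℝ → ℝ}
    (hg : ContinuousOn g (spectrum ℝ T)) (hh : ContinuousOn h (spectrum ℝ T))
    (hgh : ∀ t ∈ spectrum ℝ T, |g t| ≤ |h t|) (x : H) :
    ‖cfc g T x‖ ≤ ‖cfc h T x‖ := by
  let r : ℝ → ℝ := fun t => √(h t * h t - g t * g t)
  have hr : ContinuousOn r (spectrum ℝ T) := ((hh.mul hh).sub (hg.mul hg)).sqrt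
  have hsq : cfc (fun t => h t * h t) T =
      cfc (fun t => g t * g t) T + cfc (fun t => r t * r t) T := by
    rw [← cfc_add T (fun t => g t * g t) (fun t => r t * r t) (hg.mul hg) (hr.mul hr)]
    refine cfc_congr fun t ht => ?_
    have hle : g t * g t ≤ h t * h t := abs_le_iff_mul_self_le.1 (hgh t ht)
    simp only [r, Real.mul_self_sqrt (sub_nonneg.2 hle), add_sub_cancel]
  have hpyth : ‖cfc h T x‖ ^ 2 = ‖cfc g T x‖ ^ 2 + ‖cfc r T x‖ ^ 2 := by
    rw [norm_cfc_apply_sq T hg, norm_cfc_apply_sq T hr, norm_cfc_apply_sq T hh, hsq,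
      _root_.add_apply, inner_add_left, map_add]
  exact le_of_sq_le_sq (by rw [hpyth]; exact le_add_of_nonneg_right (sq_nonneg _)) (norm_nonneg _)

lemma norm_cfc_const_mul_apply {T : H →L[ℂ] H} {g : ℝ → ℝ} (hg : ContinuousOn g (spectrum ℝ T))
    {c : ℝ} (hc : 0 ≤ c) (x : H) : ‖cfc (fun t => c * g t) T x‖ = ‖cfc g T x‖ * c := by
  rw [cfc_const_mul c g T, _root_.smul_apply, norm_smul, Real.norm_of_nonneg hc, mul_comm]

lemma norm_cfc_apply_le_mul {T : H →L[ℂ] H} {g h : ℝ → ℝ}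
    (hg : ContinuousOn g (spectrum ℝ T)) (hh : ContinuousOn h (spectrum ℝ T)) {c : ℝ} (hc : 0 ≤ c)
    (hgh : ∀ t ∈ spectrum ℝ T, |g t| ≤ |h t| * c) (x : H) : ‖cfc g T x‖ ≤ ‖cfc h T x‖ * c := by
  rw [← norm_cfc_const_mul_apply hh hc]
  refine norm_cfc_apply_le_of_abs_le hg (hh.const_mul c) (fun t ht => ?_) x
  rw [abs_mul, abs_of_nonneg hc, mul_comm]
  exact hgh t ht

lemma norm_cfc_apply_mul_le {T : H →L[ℂ] H} {g h : ℝ → ℝ}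
    (hg : ContinuousOn g (spectrum ℝ T)) (hh : ContinuousOn h (spectrum ℝ T)) {c : ℝ} (hc : 0 ≤ c)
    (hgh : ∀ t ∈ spectrum ℝ T, |h t| * c ≤ |g t|) (x : H) : ‖cfc h T x‖ * c ≤ ‖cfc g T x‖ := by
  rw [← norm_cfc_const_mul_apply hh hc]
  refine norm_cfc_apply_le_of_abs_le (hh.const_mul c) hg (fun t ht => ?_) x
  rw [abs_mul, abs_of_nonneg hc, mul_comm]
  exact hgh t ht

theorem interpolation_error_bound_general {T : H →L[ℂ] H} (hT : IsSelfAdjoint T) {α β : ℝ}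
    (hspec : spectrum ℝ T ⊆ Set.Icc α β) (b : H) {ι : Type*} {s : Finset ι} {v : ι → ℝ}
    (hv : Set.InjOn v s) (hvmem : ∀ i ∈ s, v i ∈ Set.Icc α β) {f : ℝ → ℝ}
    (hf : ContDiffOn ℝ #s f (Set.Icc α β)) {p : ℝ[X]} (hp : p.degree < #s)
    (hpf : ∀ i ∈ s, p.eval (v i) = f (v i)) :
    ‖aeval T (nodal s v) b‖ *
        sInf ((fun t => |iteratedDerivWithin #s f (Set.Icc α β) t / (#s).factorial|) ''
          Set.Icc α β) ≤
      ‖cfc f T b - aeval T p b‖ ∧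
    ‖cfc f T b - aeval T p b‖ ≤
      ‖aeval T (nodal s v) b‖ *
        sSup ((fun t => |iteratedDerivWithin #s f (Set.Icc α β) t / (#s).factorial|) ''
          Set.Icc α β) := by
  set D := (fun t => |iteratedDerivWithin #s f (Set.Icc α β) t / (#s).factorial|) '' Set.Icc α β
  have hD : ∀ d ∈ D, 0 ≤ d := Set.forall_mem_image.2 fun _ _ => abs_nonneg _
  have hbdd : BddAbove D := bddAbove_abs_iteratedDerivWithin_Icc hf _
  have hfT : ContinuousOn f (spectrum ℝ T) := hf.continuousOn.mono hspec
  have hpT : ContinuousOn p.eval (spectrum ℝ T) := p.continuousOn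
  have hqT : ContinuousOn (nodal s v).eval (spectrum ℝ T) := (nodal s v).continuousOn
  have herr : ∀ t ∈ spectrum ℝ T, ∃ d ∈ D, |f t - p.eval t| = |(nodal s v).eval t| * d := by
    intro t ht
    obtain ⟨ξ, hξ, h⟩ := exists_sub_eval_eq_eval_nodal_mul hv hvmem hf hp hpf (hspec ht)
    exact ⟨_, Set.mem_image_of_mem _ hξ, by rw [h, abs_mul]⟩
  rw [← _root_.sub_apply, ← cfc_polynomial p T, ← cfc_polynomial (nodal s v) T,
    ← cfc_sub f p.eval T]
  constructor
  · refine norm_cfc_apply_mul_le (hfT.sub hpT) hqT (Real.sInf_nonneg hD) (fun t ht => ?_) b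
    obtain ⟨d, hd, h⟩ := herr t ht
    exact (mul_le_mul_of_nonneg_left (csInf_le ⟨0, hD⟩ hd) (abs_nonneg _)).trans_eq h.symm
  · refine norm_cfc_apply_le_mul (hfT.sub hpT) hqT (Real.sSup_nonneg hD) (fun t ht => ?_) b
    obtain ⟨d, hd, h⟩ := herr t ht
    exact h.trans_le (mul_le_mul_of_nonneg_left (le_csSup hbdd hd) (abs_nonneg _))

end FunctionalCalculus

section Matrix

lemma spectrum_real_toEuclideanCLM {𝕜 m : Type*} [RCLike 𝕜] [Fintype m] [DecidableEq m]
    (A : Matrix m m 𝕜) : spectrum ℝ (toEuclideanCLM (𝕜 := 𝕜) A) = spectrum ℝ A :=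
  AlgEquiv.spectrum_eq ((toEuclideanCLM (n := m) (𝕜 := 𝕜)).restrictScalars ℝ) A

lemma toEuclideanCLM_cfc {m : Type*} [Fintype m] [DecidableEq m] {A : Matrix m m ℂ}
    (hA : A.IsHermitian) (g : ℝ → ℝ) :
    toEuclideanCLM (𝕜 := ℂ) (hA.cfc g) = cfc g (toEuclideanCLM (𝕜 := ℂ) A) := by
  let φ := toEuclideanCLM (n := m) (𝕜 := ℂ)
  have hφ : Continuous φ := φ.toAlgEquiv.toLinearMap.continuous_of_finiteDimensional
  rw [← hA.cfc_eq]
  exact StarAlgHomClass.map_cfc (S := ℂ) φ g A (A.finite_real_spectrum.continuousOn g) hφ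
    hA (hA.isSelfAdjoint.map _)

lemma e2norm_mulVec {n : ℕ} (A : Matrix (Fin n) (Fin n) ℂ) (x : Fin n → ℂ) :
    e2norm (A *ᵥ x) = ‖toEuclideanCLM (𝕜 := ℂ) A (WithLp.toLp 2 x)‖ := by
  rw [toEuclideanCLM_toLp, EuclideanSpace.norm_eq, e2norm]

end Matrix

/-- Interpolation error bound for a matrix function: if `Q` is Hermitian with
eigenvalues in `[α, β]`, `p ∈ Π_{k-1}` interpolates a `C^k` function `f` at `k` distinct points
`μ₁, …, μ_k ∈ [α, β]` and `q(t) = ∏ⱼ (t - μⱼ)`, then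
`‖q(Q)b‖ · inf |f⁽ᵏ⁾/k!| ≤ ‖f(Q)b − p(Q)b‖ ≤ ‖q(Q)b‖ · sup |f⁽ᵏ⁾/k!|`,
inf and sup taken over `[α, β]`. -/
theorem interpolation_error_bound {n : ℕ}
    (Q : Matrix (Fin n) (Fin n) ℂ) (hQ : Q.IsHermitian)
    (α β : ℝ) (hαβ : α ≤ β)
    (hspec : ∀ i, hQ.eigenvalues i ∈ Set.Icc α β)
    (b : Fin n → ℂ) (k : ℕ) (hk : 0 < k)
    (μ : Fin k → ℝ) (hμinj : Function.Injective μ) (hμmem : ∀ i, μ i ∈ Set.Icc α β)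
    (f : ℝ → ℝ) (hf : ContDiffOn ℝ k f (Set.Icc α β))
    (p : Polynomial ℝ) (hpdeg : p.degree < (k : ℕ))
    (hinterp : ∀ i, p.eval (μ i) = f (μ i))
    (q : Polynomial ℝ) (hq : q = ∏ j, (X - C (μ j))) :
    e2norm ((hQ.cfc fun t => q.eval t) *ᵥ b) *
        sInf ((fun t : ℝ => |iteratedDerivWithin k f (Set.Icc α β) t / (k.factorial : ℝ)|) ''
          Set.Icc α β) ≤
      e2norm ((hQ.cfc f - hQ.cfc fun t => p.eval t) *ᵥ b) ∧
    e2norm ((hQ.cfc f - hQ.cfc fun t => p.eval t) *ᵥ b) ≤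
      e2norm ((hQ.cfc fun t => q.eval t) *ᵥ b) *
        sSup ((fun t : ℝ => |iteratedDerivWithin k f (Set.Icc α β) t / (k.factorial : ℝ)|) ''
          Set.Icc α β) := by
  have hT : IsSelfAdjoint (toEuclideanCLM (𝕜 := ℂ) Q) := hQ.isSelfAdjoint.map _
  have hTspec : spectrum ℝ (toEuclideanCLM (𝕜 := ℂ) Q) ⊆ Set.Icc α β := by
    rw [spectrum_real_toEuclideanCLM, hQ.spectrum_real_eq_range_eigenvalues]
    exact Set.range_subset_iff.2 hspec
  have hbound := interpolation_error_bound_general (s := univ) (v := μ) (f := f) (p := p) hT hTspec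
    (WithLp.toLp 2 b) hμinj.injOn (by simpa using hμmem) (by simpa using hf) (by simpa using hpdeg)
    (by simpa using hinterp)
  rw [card_fin, nodal_eq, ← hq] at hbound
  simp only [e2norm_mulVec, map_sub, toEuclideanCLM_cfc, cfc_polynomial _ _ hT,
    _root_.sub_apply]
  exact hbound
end

section
/- Let A be an n×n complex matrix, b ∈ ℂⁿ with b ≠ 0, V an n×k complex matrix, T a k×k tridiagonal complex matrix (T_{ij} = 0 whenever |i−j| > 1), β a scalar and w ∈ ℂⁿ, such that the Lanczos relation A V = V T + β w e_kᵀ holds and the first column of V equals b/‖b‖₂ (i.e. V e₁ = b/‖b‖₂). Then for every polynomial p of degree ≤ k−1 and every vector z ∈ ℂᵏ one has V p(T + z e_kᵀ) e₁ ‖b‖₂ = p(A) b. -/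
/-!
A relation `A V = V H + w xᵀ` gives `A V u = V H u` for every `u` with `xᵀ u = 0`, so
`p(A) V u = V p(H) u` as long as the vectors `Hⁱ u` with `i < deg p` are orthogonal to `x`. For
`H = T`, `u = e₁`, `x = e_k` they are, because `Tⁱ` vanishes below its `i`-th subdiagonal. The
identity `(T + z e_kᵀ) I = I T + z e_kᵀ` is a second relation of the same kind, with the same `H`
and `x`, so that also `p(T + z e_kᵀ) e₁ = p(T) e₁`.
-/

open Matrix Polynomial

section KrylovDecomposition

variable {R m n : Type*} [Fintype m] [Fintype n]

/-- The relation `A V = V H + w xᵀ`, called a Krylov decomposition of `A` (Stewart); the Lanczos and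
Arnoldi relations are the case where `x` is the last standard basis vector. The columns of `V` are
not required to be linearly independent. -/
def IsKrylovDecomposition [NonUnitalNonAssocSemiring R] (A : Matrix m m R) (V : Matrix m n R)
    (H : Matrix n n R) (w : m → R) (x : n → R) : Prop :=
  A * V = V * H + vecMulVec w x

theorem isKrylovDecomposition_one_add_vecMulVec [NonAssocSemiring R] [DecidableEq n]
    (H : Matrix n n R) (z x : n → R) :
    IsKrylovDecomposition (H + vecMulVec z x) 1 H z x := by
  rw [IsKrylovDecomposition, mul_one, one_mul]

namespace IsKrylovDecomposition

section Semiring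

variable [Semiring R] {A : Matrix m m R} {V : Matrix m n R} {H : Matrix n n R} {w : m → R}
  {x u : n → R}

theorem mulVec_mulVec (h : IsKrylovDecomposition A V H w x) (hu : x ⬝ᵥ u = 0) :
    A *ᵥ (V *ᵥ u) = V *ᵥ (H *ᵥ u) := by
  rw [Matrix.mulVec_mulVec, h, add_mulVec, vecMulVec_mulVec, hu, MulOpposite.op_zero, zero_smul,
    add_zero, ← Matrix.mulVec_mulVec]

theorem pow_mulVec_mulVec [DecidableEq m] [DecidableEq n] (h : IsKrylovDecomposition A V H w x)
    {d : ℕ} (hu : ∀ i < d, x ⬝ᵥ (H ^ i *ᵥ u) = 0) :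
    A ^ d *ᵥ (V *ᵥ u) = V *ᵥ (H ^ d *ᵥ u) := by
  induction d with
  | zero => simp only [pow_zero, one_mulVec]
  | succ d ih =>
    calc A ^ (d + 1) *ᵥ (V *ᵥ u) = A *ᵥ (A ^ d *ᵥ (V *ᵥ u)) := by
          rw [pow_succ', ← Matrix.mulVec_mulVec]
      _ = A *ᵥ (V *ᵥ (H ^ d *ᵥ u)) := by rw [ih fun i hi => hu i (hi.trans d.lt_succ_self)]
      _ = V *ᵥ (H *ᵥ (H ^ d *ᵥ u)) := h.mulVec_mulVec (hu d d.lt_succ_self)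
      _ = V *ᵥ (H ^ (d + 1) *ᵥ u) := by rw [Matrix.mulVec_mulVec u, ← pow_succ']

end Semiring

theorem aeval_mulVec_mulVec [CommSemiring R] [DecidableEq m] [DecidableEq n] {A : Matrix m m R}
    {V : Matrix m n R} {H : Matrix n n R} {w : m → R} {x u : n → R}
    (h : IsKrylovDecomposition A V H w x) {p : R[X]}
    (hu : ∀ i < p.natDegree, x ⬝ᵥ (H ^ i *ᵥ u) = 0) :
    aeval A p *ᵥ (V *ᵥ u) = V *ᵥ (aeval H p *ᵥ u) := by
  simp only [aeval_eq_sum_range, sum_mulVec, mulVec_sum, smul_mulVec, mulVec_smul]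
  refine Finset.sum_congr rfl fun d hd => ?_
  have hd' : d ≤ p.natDegree := Finset.mem_range_succ_iff.mp hd
  rw [h.pow_mulVec_mulVec fun i hi => hu i (hi.trans_le hd')]

end IsKrylovDecomposition

end KrylovDecomposition

/-- Upper Hessenberg matrices, whose entries below the first subdiagonal vanish; every tridiagonal
matrix is one. -/
def IsUpperHessenberg {R : Type*} [Zero R] {k : ℕ} (H : Matrix (Fin k) (Fin k) R) : Prop :=
  ∀ ⦃i j : Fin k⦄, (j : ℕ) + 1 < i → H i j = 0

theorem IsUpperHessenberg.pow_apply_eq_zero {R : Type*} [Semiring R] {k : ℕ}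
    {H : Matrix (Fin k) (Fin k) R} (hH : IsUpperHessenberg H) {d : ℕ} {i j : Fin k}
    (hij : (j : ℕ) + d < i) : (H ^ d) i j = 0 := by
  induction d generalizing i with
  | zero => rw [pow_zero, one_apply_ne (by omega)]
  | succ d ih =>
    rw [pow_succ', mul_apply]
    refine Finset.sum_eq_zero fun l _ => ?_
    rcases lt_or_ge ((j : ℕ) + d) l with hl | hl
    · rw [ih hl, mul_zero]
    · rw [hH (by omega), zero_mul]

theorem lanczos_polynomial_exactness_general {R m : Type*} [CommSemiring R] [Fintype m]
    [DecidableEq m] {k : ℕ} {A : Matrix m m R} {V : Matrix m (Fin k) R}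
    {T : Matrix (Fin k) (Fin k) R} {w : m → R} {j l : Fin k} (hT : IsUpperHessenberg T)
    (hrel : IsKrylovDecomposition A V T w (Pi.single l 1)) {p : R[X]}
    (hp : (j : ℕ) + p.natDegree ≤ l) (z : Fin k → R) :
    V *ᵥ (aeval (T + vecMulVec z (Pi.single l 1)) p *ᵥ Pi.single j 1) =
      aeval A p *ᵥ (V *ᵥ Pi.single j 1) := by
  have horth : ∀ i < p.natDegree, Pi.single l 1 ⬝ᵥ (T ^ i *ᵥ Pi.single j 1) = 0 := fun i hi => by
    rw [single_one_dotProduct, mulVec_single_one, col_apply, hT.pow_apply_eq_zero (by omega)]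
  have hmod : aeval (T + vecMulVec z (Pi.single l 1)) p *ᵥ Pi.single j 1 =
      aeval T p *ᵥ Pi.single j 1 := by
    simpa only [one_mulVec] using
      (isKrylovDecomposition_one_add_vecMulVec T z (Pi.single l 1)).aeval_mulVec_mulVec horth
  rw [hmod, hrel.aeval_mulVec_mulVec horth]

theorem e2norm_ne_zero {n : ℕ} {x : Fin n → ℂ} (hx : x ≠ 0) : e2norm x ≠ 0 := by
  rwa [e2norm_eq_norm_toLp, norm_ne_zero_iff, Ne, WithLp.toLp_eq_zero]

/-- Polynomial exactness of the (rank-one modified) Lanczos reduction: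
if `A V = V T + β w e_kᵀ` with `T` tridiagonal and `V e₁ = b / ‖b‖₂`, then for every
polynomial `p` of degree `≤ k - 1` and every `z ∈ ℂᵏ`,
`V p(T + z e_kᵀ) e₁ ‖b‖₂ = p(A) b`. -/
theorem lanczos_polynomial_exactness {n k : ℕ} (hk : 0 < k)
    (A : Matrix (Fin n) (Fin n) ℂ) (b : Fin n → ℂ) (hb : b ≠ 0)
    (V : Matrix (Fin n) (Fin k) ℂ) (T : Matrix (Fin k) (Fin k) ℂ)
    (hT : ∀ i j : Fin k, 1 < ((i : ℤ) - (j : ℤ)).natAbs → T i j = 0)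
    (β : ℂ) (w : Fin n → ℂ)
    (hrel : A * V = V * T +
      β • vecMulVec w (Pi.single (⟨k - 1, Nat.sub_lt hk one_pos⟩ : Fin k) 1))
    (hV1 : V *ᵥ Pi.single (⟨0, hk⟩ : Fin k) 1 = (e2norm b : ℂ)⁻¹ • b)
    (p : Polynomial ℂ) (hp : p.degree < (k : ℕ)) (z : Fin k → ℂ) :
    (e2norm b : ℂ) •
        (V *ᵥ ((Polynomial.aeval
            (T + vecMulVec z (Pi.single (⟨k - 1, Nat.sub_lt hk one_pos⟩ : Fin k) 1)) p) *ᵥ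
          Pi.single (⟨0, hk⟩ : Fin k) 1)) =
      (Polynomial.aeval A p) *ᵥ b := by
  have hdeg : p.natDegree ≤ k - 1 := natDegree_le_iff_coeff_eq_zero.mpr fun i hi =>
    (degree_lt_iff_coeff_zero p k).mp hp i (by omega)
  have hdecomp : IsKrylovDecomposition A V T (β • w) (Pi.single ⟨k - 1, Nat.sub_lt hk one_pos⟩ 1) :=
    hrel.trans (by rw [smul_vecMulVec])
  rw [lanczos_polynomial_exactness_general (fun i j hij => hT i j (by omega))
    hdecomp (by simpa only [zero_add] using hdeg) z, hV1, mulVec_smul,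
    smul_inv_smul₀ (Complex.ofReal_ne_zero.mpr (e2norm_ne_zero hb))]
end

section
/- Let A be an n×n Hermitian complex matrix, b ∈ ℂⁿ, and let T be a k×k Hermitian complex matrix with (real) eigenvalues θ₁, …, θ_k (with multiplicity). For τ ∈ ℝ define the characteristic polynomials π(t) = det(tI − T) and π_τ(t) = det(tI − (T + τI)), and assume π(0) ≠ 0 and π_τ(0) ≠ 0 (i.e. θⱼ ≠ 0 and θⱼ + τ ≠ 0 for all j). Define the (CG residual) vectors r = π(A)b / π(0) and r^τ = π_τ(A + τI)b / π_τ(0). Then r^τ = φ^τ · r, where φ^τ = ∏_{j=1}^{k} θⱼ/(θⱼ + τ). -/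
open Matrix Polynomial

/-! Shifting `T` by `τI` translates its characteristic polynomial, `π_τ(t) = π(t - τ)`, so
`π_τ(A + τI) = π(A)` and the two residuals are multiples of the same vector `π(A)b`, namely
`π(0) r = π(A)b = π_τ(0) r^τ`. The eigenvalues `θⱼ + τ` of the shifted matrix give
`π(0) / π_τ(0) = ∏ⱼ (-θⱼ) / ∏ⱼ (-(θⱼ + τ))`, in which the signs cancel. -/

section CommRing

variable {R m ι : Type*} [CommRing R] [Fintype m] [DecidableEq m] [Fintype ι]

theorem charpoly_add_smul_one (T : Matrix m m R) (τ : R) :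
    (T + τ • 1).charpoly = T.charpoly.comp (X - C τ) := by
  simpa only [map_neg, sub_neg_eq_add, ← sub_eq_add_neg, scalar_apply, ← smul_one_eq_diagonal]
    using charpoly_sub_scalar T (-τ)

theorem aeval_charpoly_add_smul_one {S : Type*} [Ring S] [Algebra R S] (a : S)
    (T : Matrix m m R) (τ : R) :
    aeval (a + τ • 1) (T + τ • 1).charpoly = aeval a T.charpoly := by
  have aeval_X_sub_C : aeval (a + τ • 1) (X - C τ) = a := by
    rw [map_sub, aeval_X, aeval_C, Algebra.algebraMap_eq_smul_one, add_sub_cancel_right]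
  rw [charpoly_add_smul_one, aeval_comp, aeval_X_sub_C]

theorem charpoly_add_smul_one_eq_prod {T : Matrix m m R} {θ : ι → R}
    (hθ : T.charpoly = ∏ j, (X - C (θ j))) (τ : R) :
    (T + τ • 1).charpoly = ∏ j, (X - C (θ j + τ)) := by
  rw [charpoly_add_smul_one, hθ, prod_comp]
  refine Finset.prod_congr rfl fun j _ => ?_
  rw [sub_comp, X_comp, C_comp, C_add, sub_sub, add_comm (C τ)]

theorem eval_zero_prod_X_sub_C (θ : ι → R) :
    (∏ j, (X - C (θ j))).eval 0 = ∏ j, -θ j := by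
  simp only [eval_prod, eval_sub, eval_X, eval_C, zero_sub]

theorem eval_zero_charpoly_ne_zero [IsDomain R] {T : Matrix m m R} {θ : ι → R}
    (hθ : T.charpoly = ∏ j, (X - C (θ j))) (h0 : ∀ j, θ j ≠ 0) :
    T.charpoly.eval 0 ≠ 0 := by
  rw [hθ, eval_zero_prod_X_sub_C]
  exact Finset.prod_ne_zero_iff.mpr fun j _ => neg_ne_zero.mpr (h0 j)

end CommRing

section Field

variable {K m n ι : Type*} [Field K] [Fintype m] [DecidableEq m] [Fintype n] [DecidableEq n]
  [Fintype ι]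

/-- The residual `π(A)b / π(0)`, where `π` is the characteristic polynomial of `T`. When `T` is
the Lanczos tridiagonal matrix `T_k` of `A` and `b`, it is the residual after `k` steps of the
conjugate gradient method applied to `Ax = b` with zero initial guess. For `π(0) = 0` it takes the
junk value `0`. -/
noncomputable def cgResidual (A : Matrix n n K) (T : Matrix m m K) (b : n → K) : n → K :=
  (T.charpoly.eval 0)⁻¹ • (aeval A T.charpoly *ᵥ b)

theorem eval_zero_charpoly_smul_cgResidual (A : Matrix n n K) {T : Matrix m m K} (b : n → K)
    (h0 : T.charpoly.eval 0 ≠ 0) :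
    T.charpoly.eval 0 • cgResidual A T b = aeval A T.charpoly *ᵥ b :=
  smul_inv_smul₀ h0 _

theorem cgResidual_add_smul_one (A : Matrix n n K) {T : Matrix m m K} (b : n → K) {τ : K}
    (h0 : T.charpoly.eval 0 ≠ 0) (hτ0 : (T + τ • 1).charpoly.eval 0 ≠ 0) :
    cgResidual (A + τ • 1) (T + τ • 1) b =
      (T.charpoly.eval 0 / (T + τ • 1).charpoly.eval 0) • cgResidual A T b := by
  rw [div_eq_inv_mul, mul_smul, eq_inv_smul_iff₀ hτ0, eval_zero_charpoly_smul_cgResidual _ b hτ0,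
    eval_zero_charpoly_smul_cgResidual A b h0, aeval_charpoly_add_smul_one]

theorem eval_zero_charpoly_div_add_smul_one {T : Matrix m m K} {θ : ι → K}
    (hθ : T.charpoly = ∏ j, (X - C (θ j))) (τ : K) :
    T.charpoly.eval 0 / (T + τ • 1).charpoly.eval 0 = ∏ j, θ j / (θ j + τ) := by
  simp only [charpoly_add_smul_one_eq_prod hθ, hθ, eval_zero_prod_X_sub_C,
    ← Finset.prod_div_distrib, neg_div_neg_eq]

theorem shifted_cg_residual_relation_general (A : Matrix n n K) (b : n → K) {T : Matrix m m K}
    {θ : ι → K} (hθ : T.charpoly = ∏ j, (X - C (θ j))) {τ : K}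
    (h0 : ∀ j, θ j ≠ 0) (hτ0 : ∀ j, θ j + τ ≠ 0) :
    cgResidual (A + τ • 1) (T + τ • 1) b = (∏ j, θ j / (θ j + τ)) • cgResidual A T b := by
  rw [← eval_zero_charpoly_div_add_smul_one hθ τ]
  exact cgResidual_add_smul_one A b (eval_zero_charpoly_ne_zero hθ h0)
    (eval_zero_charpoly_ne_zero (charpoly_add_smul_one_eq_prod hθ τ) hτ0)

end Field

/-- Relation between the CG residuals of the system `Ax = b` and of the
shifted system `(A + τI)x = b`: with `π(t) = det(tI - T)`, `π_τ(t) = det(tI - (T + τI))`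
(the characteristic polynomials), `r = π(A)b / π(0)`, and `r^τ = π_τ(A + τI)b / π_τ(0)`,
one has `r^τ = (∏ⱼ θⱼ/(θⱼ + τ)) · r`, where `θ₁, …, θ_k` are the eigenvalues of the
Hermitian matrix `T`. -/
theorem shifted_cg_residual_relation {n k : ℕ}
    (A : Matrix (Fin n) (Fin n) ℂ) (hA : A.IsHermitian) (b : Fin n → ℂ)
    (T : Matrix (Fin k) (Fin k) ℂ) (hT : T.IsHermitian) (τ : ℝ)
    (h0 : ∀ j, hT.eigenvalues j ≠ 0) (hτ0 : ∀ j, hT.eigenvalues j + τ ≠ 0)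
    (r rτ : Fin n → ℂ)
    (hr : r = ((T.charpoly.eval 0)⁻¹ : ℂ) • ((Polynomial.aeval A T.charpoly) *ᵥ b))
    (hrτ : rτ = (((T + (τ : ℂ) • 1).charpoly.eval 0)⁻¹ : ℂ) •
      ((Polynomial.aeval (A + (τ : ℂ) • 1) (T + (τ : ℂ) • 1).charpoly) *ᵥ b)) :
    rτ = ((∏ j, hT.eigenvalues j / (hT.eigenvalues j + τ) : ℝ) : ℂ) • r := by
  push_cast [hr, hrτ]
  exact shifted_cg_residual_relation_general A b (θ := fun j => (hT.eigenvalues j : ℂ))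
    hT.charpoly_eq (mod_cast h0) (mod_cast hτ0)
end

section
/- Let Q be an n×n invertible Hermitian complex matrix and b ∈ ℂⁿ, b ≠ 0. Let V̂ be an n×k complex matrix with orthonormal columns (V̂†V̂ = I) whose first column is b/‖b‖₂, let T̂ be a k×k real symmetric tridiagonal matrix with positive subdiagonal entries, let β̂ > 0 and let v̂ ∈ ℂⁿ be a unit vector orthogonal to all columns of V̂, such that the Lanczos relation Q² V̂ = V̂ T̂ + β̂ v̂ e_kᵀ holds (so that the columns of V̂ are the Lanczos basis of the Krylov subspace K_k(Q², b) and T̂ = V̂† Q² V̂ is positive definite). Let r_k = b − Q² V̂ T̂⁻¹ e₁ ‖b‖₂ be the residual after k steps of the conjugate gradient method applied to Q²x = b with zero initial guess. Then ‖sign(Q)b − Q V̂ T̂^{−1/2} e₁ ‖b‖₂‖₂ ≤ ‖r_k‖₂ ≤ 2κ·((κ−1)/(κ+1))^k·‖b‖₂, where κ = ‖Q‖₂·‖Q⁻¹‖₂ is the spectral condition number of Q. -/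
/-!
*First inequality.* Diagonalize `T`. If `y` is an eigenvector of `T` with eigenvalue `t`, the
Lanczos relation says that the Ritz vector `u = V y` satisfies `Q² u = t u + y_k w`, where
`w = β̂ v̂`. Since `sign q - q / √t = -sign q (q² - t) / (√t (|q| + √t))`, the error and the
residual are, up to the factor `‖b‖`, equal to `-φ(Q) w` and `-(T⁻¹)_{k1} w`, where
`φ(q) = sign q * ((√T (|q| + √T))⁻¹)_{k1}`. So it suffices to show
`|((√T (s + √T))⁻¹)_{k1}| ≤ |(T⁻¹)_{k1}|` for `s ≥ 0`. After conjugation by `diag((-1)^i)`, `T` is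
a symmetric M-matrix, hence so is its square root (a limit of polynomials with nonnegative
coefficients in `1 - T / c`), and `(s + √T)⁻¹` is entrywise nonnegative. Products of such matrices
are nonnegative too, which applies to `(√T (s + √T))⁻¹` and to
`T⁻¹ - (√T (s + √T))⁻¹ = s T⁻¹ (s + √T)⁻¹`.

*Second inequality.* The residual is orthogonal to the Krylov space, so it minimizes
`‖Q⁻¹ p(Q²) b‖` over the polynomials `p` of degree at most `k` with `p(0) = 1`. A scaled Chebyshev
polynomial bounds the minimum by `2 ((κ - 1) / (κ + 1))^k ‖Q⁻¹ b‖`, and passing between `‖·‖` and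
`‖Q⁻¹ ·‖` costs a factor `κ`.
-/

open Matrix Polynomial

/-- The spectral (operator l2) norm of a complex matrix. -/
noncomputable def specNorm {n : ℕ} (A : Matrix (Fin n) (Fin n) ℂ) : ℝ :=
  ‖Matrix.toEuclideanCLM (𝕜 := ℂ) A‖

/-! ### Closed cones of functions closed under multiplication -/

section ClosedSubalgebra

open Filter
open scoped NNReal Topology

/-- The iteration `x ↦ (ν + x²) / 2` started at `0`. It increases to its fixed point `1 - √(1 - ν)`,
and each iterate is a polynomial in `ν` with nonnegative coefficients. -/
noncomputable def sqrtIter (ν : ℝ) : ℕ → ℝ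
  | 0 => 0
  | m + 1 => (ν + sqrtIter ν m ^ 2) / 2

theorem sqrtIter_mem_Icc_and_sub_le_pow {L : ℝ} (h0 : 0 ≤ L) (h1 : L ≤ 1) (m : ℕ) :
    sqrtIter (2 * L - L ^ 2) m ∈ Set.Icc 0 L ∧ L - sqrtIter (2 * L - L ^ 2) m ≤ L ^ m := by
  induction m with
  | zero => simp [sqrtIter, h0, h1]
  | succ m ih =>
    obtain ⟨⟨hx0, hxL⟩, hpow⟩ := ih
    set x := sqrtIter (2 * L - L ^ 2) m
    have hstep : L - sqrtIter (2 * L - L ^ 2) (m + 1) = (L + x) / 2 * (L - x) := by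
      simp only [sqrtIter, x]
      ring
    have hle : (L + x) / 2 * (L - x) ≤ L * L ^ m :=
      mul_le_mul (by linarith) hpow (by linarith) h0
    have hnonneg : 0 ≤ (L + x) / 2 * (L - x) := mul_nonneg (by linarith) (by linarith)
    refine ⟨⟨?_, by linarith⟩, by rwa [hstep, pow_succ']⟩
    simp only [sqrtIter]
    nlinarith [sq_nonneg x]

theorem tendsto_sqrtIter {ν : ℝ} (h0 : 0 ≤ ν) (h1 : ν < 1) :
    Tendsto (sqrtIter ν) atTop (𝓝 (1 - √(1 - ν))) := by
  have hsq : √(1 - ν) ^ 2 = 1 - ν := Real.sq_sqrt (by linarith)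
  have hpos : 0 < √(1 - ν) := Real.sqrt_pos.2 (by linarith)
  have hle : √(1 - ν) ≤ 1 := Real.sqrt_le_one.2 (by linarith)
  have hν : 2 * (1 - √(1 - ν)) - (1 - √(1 - ν)) ^ 2 = ν := by linear_combination -hsq
  have hbound (m : ℕ) := sqrtIter_mem_Icc_and_sub_le_pow
    (sub_nonneg.2 hle) (sub_le_self 1 hpos.le) m
  rw [hν] at hbound
  set L := 1 - √(1 - ν)
  have hlower : Tendsto (fun m => L - L ^ m) atTop (𝓝 L) := by
    simpa using (tendsto_pow_atTop_nhds_zero_of_lt_one (by linarith) (by linarith)).const_sub L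
  exact tendsto_of_tendsto_of_tendsto_of_le_of_le hlower tendsto_const_nhds
    (fun m => by linarith [(hbound m).2]) fun m => (hbound m).1.2

variable {ι : Type*} {C : Subalgebra ℝ≥0 (ι → ℝ)}

theorem smul_mem_of_nonneg {A : Type*} [Ring A] [Algebra ℝ A] {S : Subalgebra ℝ≥0 A} {c : ℝ}
    (hc : 0 ≤ c) {x : A} (hx : x ∈ S) : c • x ∈ S := by
  lift c to ℝ≥0 using hc
  exact S.smul_mem hx c

theorem sqrtIter_mem {ν : ι → ℝ} (hν : ν ∈ C) (m : ℕ) : (fun i => sqrtIter (ν i) m) ∈ C := by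
  induction m with
  | zero => exact C.zero_mem
  | succ m ih =>
    convert smul_mem_of_nonneg (c := 1 / 2) (by norm_num) (C.add_mem hν (C.pow_mem ih 2)) using 1
    ext i
    simp only [sqrtIter, Pi.smul_apply, Pi.add_apply, Pi.pow_apply, smul_eq_mul]
    ring

theorem one_sub_sqrt_one_sub_mem (hC : IsClosed (C : Set (ι → ℝ))) {ν : ι → ℝ} (hν : ν ∈ C)
    (h0 : ∀ i, 0 ≤ ν i) (h1 : ∀ i, ν i < 1) : (fun i => 1 - √(1 - ν i)) ∈ C :=
  hC.mem_of_tendsto (tendsto_pi_nhds.2 fun i => tendsto_sqrtIter (h0 i) (h1 i))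
    (Eventually.of_forall (sqrtIter_mem hν))

theorem inv_one_sub_mem (hC : IsClosed (C : Set (ι → ℝ))) {ν : ι → ℝ} (hν : ν ∈ C)
    (h0 : ∀ i, 0 ≤ ν i) (h1 : ∀ i, ν i < 1) : (fun i => (1 - ν i)⁻¹) ∈ C := by
  have hsum (m : ℕ) : (fun i => ∑ l ∈ Finset.range m, ν i ^ l) ∈ C := by
    convert C.sum_mem fun l (_ : l ∈ Finset.range m) => C.pow_mem hν l using 1
    ext i
    simp
  exact hC.mem_of_tendsto
    (tendsto_pi_nhds.2 fun i => (hasSum_geometric_of_lt_one (h0 i) (h1 i)).tendsto_sum_nat)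
    (Eventually.of_forall hsum)

theorem inv_add_sqrt_mem (hC : IsClosed (C : Set (ι → ℝ))) {t : ι → ℝ} (ht : ∀ i, 0 < t i)
    {c : ℝ} (hc : 0 < c) (htc : ∀ i, t i ≤ c) (hmem : (fun i => 1 - t i / c) ∈ C)
    {s : ℝ} (hs : 0 ≤ s) : (fun i => (s + √(t i))⁻¹) ∈ C := by
  have : 0 < √c := Real.sqrt_pos.2 hc
  have hsqrt_t (i : ι) : 0 < √(t i) := Real.sqrt_pos.2 (ht i)
  have hsqrt_le (i : ι) : √(t i) ≤ √c := Real.sqrt_le_sqrt (htc i)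
  have hroot : (fun i => 1 - √(t i) / √c) ∈ C := by
    convert one_sub_sqrt_one_sub_mem hC hmem
      (fun i => sub_nonneg.2 ((div_le_one hc).2 (htc i)))
      (fun i => sub_lt_self 1 (div_pos (ht i) hc)) using 3 with i
    rw [sub_sub_cancel, Real.sqrt_div (ht i).le]
  -- `s + √t = (s + √c) (1 - ν)` with `ν = (√c - √t) / (s + √c) ∈ [0, 1)`
  have hν : (fun i => (√c - √(t i)) / (s + √c)) ∈ C := by
    convert smul_mem_of_nonneg (c := √c / (s + √c)) (by positivity) hroot using 1
    ext i
    simp only [Pi.smul_apply, smul_eq_mul]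
    field_simp
  have hneumann := inv_one_sub_mem hC hν
    (fun i => div_nonneg (sub_nonneg.2 (hsqrt_le i)) (by positivity))
    (fun i => (div_lt_one (by positivity)).2 (by linarith [hsqrt_t i]))
  convert smul_mem_of_nonneg (c := (s + √c)⁻¹) (by positivity) hneumann using 1
  ext i
  have hne : s + √(t i) ≠ 0 := (add_pos_of_nonneg_of_pos hs (hsqrt_t i)).ne'
  have hfactor : 1 - (√c - √(t i)) / (s + √c) = (s + √(t i)) / (s + √c) := by
    field_simp
    ring
  simp only [Pi.smul_apply, smul_eq_mul, hfactor]
  field_simp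

end ClosedSubalgebra

/-! ### Square roots of symmetric M-matrices -/

section SignPattern

open scoped NNReal

variable {m : Type*} [Fintype m] [DecidableEq m]

/-- The cone of matrices whose `(i, j)` entry has the sign `ε i * ε j` or vanishes. It is the
conjugate, by the signature matrix `diag ε`, of the cone of entrywise nonnegative matrices. -/
def signPattern (ε : m → ℤˣ) : Subalgebra ℝ≥0 (Matrix m m ℝ) where
  carrier := {A | ∀ i j, 0 ≤ (ε i * ε j) • A i j}
  mul_mem' {A B} hA hB i j := by
    rw [Matrix.mul_apply, Finset.smul_sum]
    refine Finset.sum_nonneg fun l _ => ?_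
    have hsign : ε i * ε j = (ε i * ε l) * (ε l * ε j) := by
      rw [mul_assoc (ε i), ← mul_assoc (ε l), Int.units_mul_self, one_mul]
    simpa only [hsign, smul_mul_smul_comm] using mul_nonneg (hA i l) (hB l j)
  add_mem' {A B} hA hB i j := by
    simpa only [Matrix.add_apply, smul_add] using add_nonneg (hA i j) (hB i j)
  algebraMap_mem' c i j := by
    rw [Matrix.algebraMap_matrix_apply]
    split_ifs with h
    · simp [h, ← sq]
    · simp

variable {ε : m → ℤˣ} {A B : Matrix m m ℝ}

theorem mem_signPattern : A ∈ signPattern ε ↔ ∀ i j, 0 ≤ (ε i * ε j) • A i j := Iff.rfl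

theorem isClosed_signPattern : IsClosed (signPattern ε : Set (Matrix m m ℝ)) := by
  have hcoe : (signPattern ε : Set (Matrix m m ℝ)) =
      ⋂ i, ⋂ j, {A : Matrix m m ℝ | 0 ≤ (ε i * ε j) • A i j} := by
    ext A
    simp [mem_signPattern]
  rw [hcoe]
  exact isClosed_iInter fun i => isClosed_iInter fun j =>
    isClosed_le continuous_const ((continuous_id.matrix_elem i j).const_smul _)

theorem abs_units_int_smul (u : ℤˣ) (x : ℝ) : |u • x| = |x| := by
  rcases Int.units_eq_one_or u with rfl | rfl <;> simp

theorem abs_apply_le_of_mem_signPattern (hA : A ∈ signPattern ε) (hBA : B - A ∈ signPattern ε)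
    (i j : m) : |A i j| ≤ |B i j| := by
  have hle : (ε i * ε j) • A i j ≤ (ε i * ε j) • B i j := by
    simpa only [Matrix.sub_apply, smul_sub, sub_nonneg] using hBA i j
  simpa only [abs_units_int_smul] using abs_le_abs_of_nonneg (hA i j) hle

end SignPattern

section Spectral

open scoped NNReal

variable {m : Type*} [Fintype m] [DecidableEq m] {T : Matrix m m ℝ} (hT : T.IsHermitian)

/-- The algebra homomorphism `d ↦ U diag(d) Uᵀ`, where `U` is the eigenvector matrix of `T`. It is
the functional calculus of `T` on functions that are only given at the indices of the eigenvalues,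
which makes the whole algebra structure of `m → ℝ` available. -/
noncomputable def spectralHom : (m → ℝ) →ₐ[ℝ] Matrix m m ℝ :=
  (Unitary.conjStarAlgAut ℝ (Matrix m m ℝ) hT.eigenvectorUnitary : _ →ₐ[ℝ] _).comp
    (diagonalAlgHom ℝ)

theorem cfc_eq_spectralHom (f : ℝ → ℝ) :
    hT.cfc f = spectralHom hT (fun i => f (hT.eigenvalues i)) := rfl

theorem spectralHom_eigenvalues : spectralHom hT hT.eigenvalues = T :=
  hT.spectral_theorem.symm

theorem spectralHom_apply (d : m → ℝ) (i j : m) :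
    spectralHom hT d i j = ∑ l, d l *
      (hT.eigenvectorBasis l i * hT.eigenvectorBasis l j) := by
  change Unitary.conjStarAlgAut ℝ (Matrix m m ℝ) hT.eigenvectorUnitary (diagonal d) i j = _
  rw [Unitary.conjStarAlgAut_apply, Matrix.mul_apply]
  simp only [mul_diagonal, star_apply, Matrix.IsHermitian.eigenvectorUnitary_apply, star_trivial]
  exact Finset.sum_congr rfl fun l _ => by ring

theorem inv_eq_spectralHom (h : ∀ i, hT.eigenvalues i ≠ 0) :
    T⁻¹ = spectralHom hT hT.eigenvalues⁻¹ := by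
  refine Matrix.inv_eq_right_inv ?_
  nth_rw 1 [← spectralHom_eigenvalues hT]
  rw [← map_mul, ← map_one (spectralHom hT)]
  congr 1
  exact funext fun i => mul_inv_cancel₀ (h i)

variable {hT} {ε : m → ℤˣ}

theorem spectralHom_inv_add_sqrt_mem_signPattern (hpos : ∀ i, 0 < hT.eigenvalues i)
    (hoff : ∀ i j, i ≠ j → (ε i * ε j) • T i j ≤ 0) {s : ℝ} (hs : 0 ≤ s) :
    spectralHom hT (fun i => (s + √(hT.eigenvalues i))⁻¹) ∈ signPattern ε := by
  obtain ⟨c, hc, hdiag, heig⟩ : ∃ c : ℝ, 0 < c ∧ (∀ i, T i i ≤ c) ∧ ∀ i, hT.eigenvalues i ≤ c := by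
    obtain ⟨c₁, h₁⟩ := (Set.finite_range fun i => T i i).bddAbove
    obtain ⟨c₂, h₂⟩ := (Set.finite_range hT.eigenvalues).bddAbove
    exact ⟨max 1 (max c₁ c₂), by positivity,
      fun i => (h₁ ⟨i, rfl⟩).trans (by simp), fun i => (h₂ ⟨i, rfl⟩).trans (by simp)⟩
  have hmem : 1 - c⁻¹ • T ∈ signPattern ε := by
    intro i j
    rw [Matrix.sub_apply, Matrix.smul_apply]
    by_cases h : i = j
    · subst h
      simpa [← sq, inv_mul_le_one₀ hc] using hdiag i
    · rw [Matrix.one_apply_ne h, zero_sub, smul_neg, smul_comm, ← smul_neg]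
      exact smul_nonneg (inv_nonneg.2 hc.le) (neg_nonneg.2 (hoff i j h))
  have hcont : Continuous (spectralHom hT) :=
    (spectralHom hT).toLinearMap.continuous_of_finiteDimensional
  refine inv_add_sqrt_mem (C := (signPattern ε).comap ((spectralHom hT).restrictScalars ℝ≥0))
    (isClosed_signPattern.preimage hcont) hpos hc heig ?_ hs
  change spectralHom hT _ ∈ signPattern ε
  convert hmem
  nth_rw 3 [← spectralHom_eigenvalues hT]
  rw [← map_smul, ← map_one (spectralHom hT), ← map_sub]
  congr 1
  ext i
  simp [div_eq_inv_mul]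

theorem abs_cfc_inv_sqrt_mul_add_sqrt_apply_le (hpos : ∀ i, 0 < hT.eigenvalues i)
    (hoff : ∀ i j, i ≠ j → (ε i * ε j) • T i j ≤ 0) {s : ℝ} (hs : 0 ≤ s) (i j : m) :
    |hT.cfc (fun t => (√t * (s + √t))⁻¹) i j| ≤ |T⁻¹ i j| := by
  have hsqrt := spectralHom_inv_add_sqrt_mem_signPattern hpos hoff le_rfl
  have hres := spectralHom_inv_add_sqrt_mem_signPattern hpos hoff hs
  refine abs_apply_le_of_mem_signPattern (ε := ε) ?_ ?_ i j
  · convert mul_mem hsqrt hres using 1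
    rw [cfc_eq_spectralHom, ← map_mul]
    congr 1
    ext l
    simp [mul_comm]
  -- `1 / t - 1 / (√t (s + √t)) = s / (t (s + √t))`
  · convert smul_mem_of_nonneg hs (mul_mem (mul_mem hsqrt hsqrt) hres) using 1
    rw [cfc_eq_spectralHom, inv_eq_spectralHom hT fun l => (hpos l).ne', ← map_sub, ← map_mul,
      ← map_mul, ← map_smul]
    congr 1
    ext l
    obtain ⟨x, hx, hxl⟩ : ∃ x, 0 < x ∧ hT.eigenvalues l = x ^ 2 :=
      ⟨√(hT.eigenvalues l), Real.sqrt_pos.2 (hpos l), (Real.sq_sqrt (hpos l).le).symm⟩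
    simp only [Pi.sub_apply, Pi.inv_apply, Pi.smul_apply, Pi.mul_apply, hxl, Real.sqrt_sq hx.le,
      smul_eq_mul, zero_add]
    field_simp
    ring

end Spectral

/-! ### Chebyshev polynomials -/

section Chebyshev

theorem pow_div_two_le_eval_chebyshev {z : ℝ} (hz : 0 < z) (k : ℕ) :
    z ^ k / 2 ≤ (Chebyshev.T ℝ k).eval ((z + z⁻¹) / 2) := by
  rw [← Real.cosh_log hz, Chebyshev.T_real_cosh, Int.cast_natCast, ← Real.log_pow,
    Real.cosh_log (pow_pos hz k)]
  linarith [inv_pos.2 (pow_pos hz k)]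

theorem natDegree_one_sub_C_mul_X_le (c : ℝ) : (1 - C c * X : ℝ[X]).natDegree ≤ 1 :=
  (natDegree_sub_le _ _).trans (by simpa using natDegree_C_mul_le c X)

theorem exists_polynomial_abs_eval_le_of_lt {m M : ℝ} (hm : 0 < m) (hmM : m < M) (k : ℕ) :
    ∃ p : ℝ[X], p.natDegree ≤ k ∧ p.eval 0 = 1 ∧
      ∀ x ∈ Set.Icc (m ^ 2) (M ^ 2), |p.eval x| ≤ 2 * ((M - m) / (M + m)) ^ k := by
  have hdiff : 0 < M - m := sub_pos.2 hmM
  have hsum : 0 < M + m := by linarith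
  have hsq : 0 < M ^ 2 - m ^ 2 := by nlinarith
  set γ := (M ^ 2 + m ^ 2) / (M ^ 2 - m ^ 2) with hγ
  have hγz : γ = ((M + m) / (M - m) + ((M + m) / (M - m))⁻¹) / 2 := by
    rw [hγ, sq_sub_sq]
    field_simp
    ring
  set τ := (Chebyshev.T ℝ k).eval γ
  have hτ : ((M + m) / (M - m)) ^ k / 2 ≤ τ := by
    simpa only [τ, hγz] using pow_div_two_le_eval_chebyshev (div_pos hsum hdiff) k
  have hτ_pos : 0 < τ := lt_of_lt_of_le (by positivity) hτ
  -- `x ↦ γ (1 - 2 x / (M² + m²))` maps `[m², M²]` onto `[-1, 1]` and sends `0` to `γ`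
  refine ⟨C τ⁻¹ * (Chebyshev.T ℝ k).comp (C γ * (1 - C (2 / (M ^ 2 + m ^ 2)) * X)), ?_, ?_, ?_⟩
  · have hT : (Chebyshev.T ℝ k).natDegree ≤ k :=
      natDegree_le_of_degree_le (by simp [Chebyshev.degree_T])
    calc _ ≤ _ := (natDegree_C_mul_le _ _).trans natDegree_comp_le
      _ ≤ k * 1 := Nat.mul_le_mul hT
        ((natDegree_C_mul_le _ _).trans (natDegree_one_sub_C_mul_X_le _))
      _ = k := mul_one k
  · simp [τ, hτ_pos.ne']
  · rintro x ⟨hx₁, hx₂⟩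
    have hx : |γ * (1 - 2 / (M ^ 2 + m ^ 2) * x)| ≤ 1 := by
      have hγx : γ * (1 - 2 / (M ^ 2 + m ^ 2) * x) =
          (M ^ 2 + m ^ 2 - 2 * x) / (M ^ 2 - m ^ 2) := by
        rw [hγ]
        field_simp
      rw [hγx, abs_le, le_div_iff₀ hsq, div_le_iff₀ hsq]
      constructor <;> linarith
    calc |_| = τ⁻¹ * |(Chebyshev.T ℝ k).eval (γ * (1 - 2 / (M ^ 2 + m ^ 2) * x))| := by
          simp [abs_mul, abs_of_pos hτ_pos]
      _ ≤ τ⁻¹ := mul_le_of_le_one_right (inv_nonneg.2 hτ_pos.le)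
          (Chebyshev.abs_eval_T_real_le_one (k : ℤ) hx)
      _ ≤ (((M + m) / (M - m)) ^ k / 2)⁻¹ := inv_anti₀ (by positivity) hτ
      _ = 2 * ((M - m) / (M + m)) ^ k := by
          rw [inv_div, ← inv_div (M + m), inv_pow, div_eq_mul_inv]

theorem exists_polynomial_abs_eval_le {m M : ℝ} (hm : 0 < m) (hmM : m ≤ M) {k : ℕ} (hk : 0 < k) :
    ∃ p : ℝ[X], p.natDegree ≤ k ∧ p.eval 0 = 1 ∧
      ∀ x ∈ Set.Icc (m ^ 2) (M ^ 2), |p.eval x| ≤ 2 * ((M - m) / (M + m)) ^ k := by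
  rcases hmM.eq_or_lt with rfl | hlt
  · refine ⟨1 - C (m ^ 2)⁻¹ * X, (natDegree_one_sub_C_mul_X_le _).trans hk, by simp, ?_⟩
    intro x hx
    obtain rfl : x = m ^ 2 := by simpa using hx
    simp [hm.ne', hk.ne']
  · exact exists_polynomial_abs_eval_le_of_lt hm hlt k

end Chebyshev

/-! ### The conjugate gradient residual -/

/-- The condition number `‖u‖ * ‖u⁻¹‖` of a unit, with respect to inversion. -/
noncomputable def condNumber {A : Type*} [NormedRing A] (u : Aˣ) : ℝ :=
  ‖(u : A)‖ * ‖(↑u⁻¹ : A)‖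

theorem one_le_condNumber {A : Type*} [NormedRing A] [NormOneClass A] (u : Aˣ) :
    1 ≤ condNumber u := by
  rw [condNumber, ← norm_one (α := A), ← u.mul_inv]
  exact norm_mul_le _ _

section CStarAlgebra

variable {A : Type*} [CStarAlgebra A]

theorem norm_aeval_sq_le {a : A} (ha : IsSelfAdjoint a) {p : ℝ[X]} {c : ℝ} (hc : 0 ≤ c)
    (hp : ∀ x ∈ spectrum ℝ a, |p.eval (x ^ 2)| ≤ c) : ‖aeval (a ^ 2) p‖ ≤ c := by
  rw [← expand_aeval, ← cfc_polynomial (expand ℝ 2 p) a]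
  exact norm_cfc_le hc fun x hx => by simpa only [expand_eval, Real.norm_eq_abs] using hp x hx

theorem exists_polynomial_norm_aeval_sq_le [Nontrivial A] {u : Aˣ} (hu : IsSelfAdjoint (u : A))
    {k : ℕ} (hk : 0 < k) : ∃ p : ℝ[X], p.natDegree ≤ k ∧ p.eval 0 = 1 ∧
      ‖aeval ((u : A) ^ 2) p‖ ≤ 2 * ((condNumber u - 1) / (condNumber u + 1)) ^ k := by
  have hκ : 1 ≤ condNumber u := one_le_condNumber u
  have hN : 0 < ‖(↑u⁻¹ : A)‖ := norm_pos_iff.2 (u⁻¹).ne_zero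
  obtain ⟨p, hp, hp0, hp_le⟩ := exists_polynomial_abs_eval_le (inv_pos.2 hN)
    ((inv_le_iff_one_le_mul₀ hN).2 hκ) hk
  refine ⟨p, hp, hp0, ?_⟩
  have hquot : (‖(u : A)‖ - ‖(↑u⁻¹ : A)‖⁻¹) /
      (‖(u : A)‖ + ‖(↑u⁻¹ : A)‖⁻¹) = (condNumber u - 1) / (condNumber u + 1) := by
    rw [condNumber]
    field_simp
  rw [hquot] at hp_le
  have : 0 ≤ condNumber u - 1 := sub_nonneg.2 hκ
  refine norm_aeval_sq_le hu (by positivity) fun x hx => ?_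
  have hupper : |x| ≤ ‖(u : A)‖ := spectrum.norm_le_norm_of_mem hx
  have hinv : |x|⁻¹ ≤ ‖(↑u⁻¹ : A)‖ := by
    simpa only [Real.norm_eq_abs, abs_inv] using
      spectrum.norm_le_norm_of_mem (spectrum.inv₀_mem_inv_iff.2 hx)
  have hlower : ‖(↑u⁻¹ : A)‖⁻¹ ≤ |x| :=
    inv_le_of_inv_le₀ (abs_pos.2 (spectrum.ne_zero_of_mem_of_unit hx)) hinv
  rw [← sq_abs]
  exact hp_le _ ⟨by gcongr, by gcongr⟩

end CStarAlgebra

section Operator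

variable {E : Type*} [NormedAddCommGroup E] [NormedSpace ℂ E]

theorem aeval_apply_mem {A : E →L[ℂ] E} {K : Submodule ℂ E} {b : E} {k : ℕ}
    (hK : ∀ j < k, (A ^ j) b ∈ K) {p : ℝ[X]} (hp : p.natDegree < k) : aeval A p b ∈ K := by
  rw [aeval_eq_sum_range' hp, _root_.sum_apply]
  exact K.sum_mem fun j hj => (K.restrictScalars ℝ).smul_mem _ (hK j (Finset.mem_range.1 hj))

variable {Q : (E →L[ℂ] E)ˣ}

theorem apply_inv_apply (x : E) : (Q : E →L[ℂ] E) ((↑Q⁻¹ : E →L[ℂ] E) x) = x :=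
  congr($(Q.mul_inv) x)

theorem inv_apply_apply (x : E) : (↑Q⁻¹ : E →L[ℂ] E) ((Q : E →L[ℂ] E) x) = x :=
  congr($(Q.inv_mul) x)

end Operator

section Krylov

variable {E : Type*} [NormedAddCommGroup E] [InnerProductSpace ℂ E] [CompleteSpace E]
  {Q : (E →L[ℂ] E)ˣ}

theorem norm_inv_apply_le_of_inner_eq_zero (hQ : IsSelfAdjoint (Q : E →L[ℂ] E)) {r d : E}
    (h : inner ℂ r d = 0) :
    ‖(↑Q⁻¹ : E →L[ℂ] E) r‖ ≤ ‖(↑Q⁻¹ : E →L[ℂ] E) r + (Q : E →L[ℂ] E) d‖ := by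
  have horth : inner ℂ ((↑Q⁻¹ : E →L[ℂ] E) r) ((Q : E →L[ℂ] E) d) = 0 :=
    calc _ = inner ℂ ((Q : E →L[ℂ] E) ((↑Q⁻¹ : E →L[ℂ] E) r)) d := (hQ.isSymmetric _ _).symm
      _ = 0 := by rw [apply_inv_apply, h]
  refine le_of_sq_le_sq ?_ (norm_nonneg _)
  rw [sq, sq, norm_add_sq_eq_norm_sq_add_norm_sq_of_inner_eq_zero _ _ horth]
  exact le_add_of_nonneg_right (mul_self_nonneg _)

variable {K : Submodule ℂ E} {b y : E} {k : ℕ}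

theorem norm_inv_residual_le (hQ : IsSelfAdjoint (Q : E →L[ℂ] E)) (hk : 0 < k)
    (hK : ∀ j < k, (((Q : E →L[ℂ] E) ^ 2) ^ j) b ∈ K) (hy : y ∈ K)
    (hr : b - ((Q : E →L[ℂ] E) ^ 2) y ∈ Kᗮ) {p : ℝ[X]} (hp : p.natDegree ≤ k)
    (hp0 : p.eval 0 = 1) :
    ‖(↑Q⁻¹ : E →L[ℂ] E) (b - ((Q : E →L[ℂ] E) ^ 2) y)‖ ≤
      ‖(↑Q⁻¹ : E →L[ℂ] E) (aeval ((Q : E →L[ℂ] E) ^ 2) p b)‖ := by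
  set A := (Q : E →L[ℂ] E) ^ 2 with hA
  set d := y + aeval A p.divX b
  have hd : d ∈ K := K.add_mem hy <| aeval_apply_mem hK <| by
    rw [natDegree_divX_eq_natDegree_tsub_one]
    omega
  have hpb : aeval A p b = (b - A y) + (Q : E →L[ℂ] E) ((Q : E →L[ℂ] E) d) := by
    have hAd : (Q : E →L[ℂ] E) ((Q : E →L[ℂ] E) d) = A d := by rw [hA, sq]; rfl
    have hp_eq : aeval A p = 1 + A * aeval A p.divX := by
      conv_lhs => rw [← X_mul_divX_add p, coeff_zero_eq_eval_zero, hp0]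
      simp [add_comm]
    rw [hAd, hp_eq, map_add A]
    change b + A (aeval A p.divX b) = _
    abel
  rw [hpb, map_add (↑Q⁻¹ : E →L[ℂ] E), inv_apply_apply]
  exact norm_inv_apply_le_of_inner_eq_zero hQ (K.inner_left_of_mem_orthogonal hd hr)

theorem norm_residual_le (hQ : IsSelfAdjoint (Q : E →L[ℂ] E)) (hk : 0 < k)
    (hK : ∀ j < k, (((Q : E →L[ℂ] E) ^ 2) ^ j) b ∈ K) (hy : y ∈ K)
    (hr : b - ((Q : E →L[ℂ] E) ^ 2) y ∈ Kᗮ) :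
    ‖b - ((Q : E →L[ℂ] E) ^ 2) y‖ ≤
      2 * condNumber Q * ((condNumber Q - 1) / (condNumber Q + 1)) ^ k * ‖b‖ := by
  rcases subsingleton_or_nontrivial E with _ | _
  · simp [Subsingleton.elim _ (0 : E)]
  obtain ⟨p, hp, hp0, hpQ⟩ := exists_polynomial_norm_aeval_sq_le hQ hk
  set c := 2 * ((condNumber Q - 1) / (condNumber Q + 1)) ^ k with hc
  set r := b - ((Q : E →L[ℂ] E) ^ 2) y
  calc ‖r‖ = ‖(Q : E →L[ℂ] E) ((↑Q⁻¹ : E →L[ℂ] E) r)‖ := by rw [apply_inv_apply]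
    _ ≤ ‖(Q : E →L[ℂ] E)‖ * ‖(↑Q⁻¹ : E →L[ℂ] E) r‖ := ContinuousLinearMap.le_opNorm _ _
    _ ≤ ‖(Q : E →L[ℂ] E)‖ * ‖(↑Q⁻¹ : E →L[ℂ] E) (aeval ((Q : E →L[ℂ] E) ^ 2) p b)‖ := by
        gcongr
        exact norm_inv_residual_le hQ hk hK hy hr hp hp0
    _ ≤ ‖(Q : E →L[ℂ] E)‖ * (‖(↑Q⁻¹ : E →L[ℂ] E)‖ * (c * ‖b‖)) := by
        gcongr
        exact ContinuousLinearMap.le_opNorm_of_le _ (ContinuousLinearMap.le_of_opNorm_le _ hpQ b)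
    _ = _ := by
        rw [hc, condNumber]
        ring

end Krylov

/-! ### The sign function -/

section Sign

theorem sign_eq_div_abs (x : ℝ) : Real.sign x = x / |x| := by
  rcases lt_trichotomy x 0 with h | rfl | h
  · rw [Real.sign_of_neg h, abs_of_neg h, div_neg, div_self h.ne]
  · simp
  · rw [Real.sign_of_pos h, abs_of_pos h, div_self h.ne']

theorem abs_sign_le_one (x : ℝ) : |Real.sign x| ≤ 1 := by
  rcases Real.sign_apply_eq x with h | h | h <;> simp [h]

theorem sign_sub_inv_sqrt_mul {x t : ℝ} (hx : x ≠ 0) (ht : 0 < t) :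
    Real.sign x - (√t)⁻¹ * x = Real.sign x * (√t * (|x| + √t))⁻¹ * (t - x ^ 2) := by
  have : 0 < |x| := abs_pos.2 hx
  obtain ⟨s, hs, rfl⟩ : ∃ s, 0 < s ∧ t = s ^ 2 :=
    ⟨√t, Real.sqrt_pos.2 ht, (Real.sq_sqrt ht.le).symm⟩
  rw [sign_eq_div_abs, Real.sqrt_sq hs.le, ← sq_abs x]
  field_simp
  ring

variable {A : Type*} [Ring A] [Algebra ℝ A] {u : Aˣ}

theorem continuousOn_sign_spectrum :
    ContinuousOn Real.sign (spectrum ℝ (u : A)) := by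
  simp only [funext sign_eq_div_abs]
  exact continuousOn_id.div continuous_abs.continuousOn
    fun x hx => abs_ne_zero.2 (spectrum.ne_zero_of_mem_of_unit hx)

theorem continuousOn_sign_mul_inv_spectrum {t : ℝ} (ht : 0 < t) :
    ContinuousOn (fun x => Real.sign x * (√t * (|x| + √t))⁻¹) (spectrum ℝ (u : A)) := by
  have : 0 < √t := Real.sqrt_pos.2 ht
  exact continuousOn_sign_spectrum.mul
    ((by fun_prop : ContinuousOn (fun x => √t * (|x| + √t)) _).inv₀ fun x _ => by positivity)

theorem cfc_sign_apply_sub_inv_sqrt_smul {E : Type*} [NormedAddCommGroup E]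
    [InnerProductSpace ℂ E] [CompleteSpace E] {Q : (E →L[ℂ] E)ˣ}
    (hQ : IsSelfAdjoint (Q : E →L[ℂ] E)) {t : ℝ} (ht : 0 < t) (x : E) :
    cfc Real.sign (Q : E →L[ℂ] E) x - (√t)⁻¹ • (Q : E →L[ℂ] E) x =
      cfc (fun x => Real.sign x * (√t * (|x| + √t))⁻¹) (Q : E →L[ℂ] E)
        (t • x - ((Q : E →L[ℂ] E) ^ 2) x) := by
  have hsign := continuousOn_sign_spectrum (u := Q)
  have hh := continuousOn_sign_mul_inv_spectrum (u := Q) ht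
  have hcfc : cfc Real.sign (Q : E →L[ℂ] E) - (√t)⁻¹ • (Q : E →L[ℂ] E) =
      cfc (fun x => Real.sign x * (√t * (|x| + √t))⁻¹) (Q : E →L[ℂ] E) *
        (t • 1 - (Q : E →L[ℂ] E) ^ 2) := by
    calc _ = cfc (fun x => Real.sign x - (√t)⁻¹ * x) (Q : E →L[ℂ] E) := by
          rw [cfc_sub .., cfc_const_mul_id ..]
      _ = cfc (fun x => Real.sign x * (√t * (|x| + √t))⁻¹ * (t - x ^ 2)) (Q : E →L[ℂ] E) :=
          cfc_congr fun x hx => sign_sub_inv_sqrt_mul (spectrum.ne_zero_of_mem_of_unit hx) ht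
      _ = _ := by
          rw [cfc_mul .., cfc_sub .., cfc_const .., cfc_pow_id .., Algebra.algebraMap_eq_smul_one]
  exact congr($hcfc x)

end Sign

/-! ### The Lanczos relation -/

section RitzVector

variable {m E : Type*} [Fintype m] [DecidableEq m] [AddCommGroup E] [Module ℂ E]
  {T : Matrix m m ℝ} (hT : T.IsHermitian) (v : m → E)

/-- The Ritz vector of the `l`-th eigenvector of `T`: the combination of the vectors `v` whose
coefficients are the entries of that eigenvector. -/
noncomputable def ritzVector (l : m) : E :=
  ∑ i, (hT.eigenvectorBasis l i : ℂ) • v i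

theorem sum_spectralHom_smul (d : m → ℝ) (j : m) :
    ∑ i, (spectralHom hT d i j : ℂ) • v i =
      ∑ l, ((d l * hT.eigenvectorBasis l j : ℝ) : ℂ) • ritzVector hT v l := by
  simp only [spectralHom_apply, ritzVector, Complex.ofReal_sum, Finset.sum_smul, Finset.smul_sum]
  rw [Finset.sum_comm]
  refine Finset.sum_congr rfl fun l _ => Finset.sum_congr rfl fun i _ => ?_
  rw [smul_smul]
  push_cast
  ring_nf

theorem sum_eigenvectorBasis_smul_ritzVector (j : m) :
    ∑ l, (hT.eigenvectorBasis l j : ℂ) • ritzVector hT v l = v j := by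
  have hone : spectralHom hT (fun _ => 1) = 1 := map_one _
  simpa [hone, Matrix.one_apply, ite_smul] using (sum_spectralHom_smul hT v (fun _ => 1) j).symm

theorem sum_eigenvectorBasis_smul_sum (l : m) :
    ∑ j, (hT.eigenvectorBasis l j : ℂ) • ∑ i, (T i j : ℂ) • v i =
      (hT.eigenvalues l : ℂ) • ritzVector hT v l := by
  have heig (i : m) :
      ∑ j, (hT.eigenvectorBasis l j : ℂ) * T i j = hT.eigenvalues l * hT.eigenvectorBasis l i := by
    have := congrFun (hT.mulVec_eigenvectorBasis l) i
    simp only [mulVec, dotProduct, Pi.smul_apply, smul_eq_mul] at this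
    rw [← Complex.ofReal_mul, ← this]
    simp [mul_comm]
  simp only [ritzVector, Finset.smul_sum, smul_smul, ← heig, Finset.sum_smul]
  exact Finset.sum_comm

theorem ritzVector_ne_zero {v : m → E} (hv : LinearIndependent ℂ v) (l : m) :
    ritzVector hT v l ≠ 0 := by
  intro h
  refine hT.eigenvectorBasis.orthonormal.ne_zero l ?_
  ext i
  simpa using Fintype.linearIndependent_iff.1 hv _ h i

end RitzVector

section Lanczos

variable {E : Type*} [NormedAddCommGroup E] [InnerProductSpace ℂ E] {m : ℕ}

/-- The state of the Lanczos process for `A` after `m + 1` steps: `v` is the orthonormal basis, `T`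
the Jacobi matrix and `w` the next basis vector before normalization (usually written `β̂ v̂`),
so that `map_apply` is the matrix relation `A V = V T + w e_kᵀ` read column by column. -/
structure IsLanczosDecomposition (A : E →L[ℂ] E) (v : Fin (m + 1) → E)
    (T : Matrix (Fin (m + 1)) (Fin (m + 1)) ℝ) (w : E) : Prop where
  orthonormal : Orthonormal ℂ v
  isHermitian : T.IsHermitian
  tridiagonal : ∀ i j : Fin (m + 1), 1 < ((i : ℤ) - (j : ℤ)).natAbs → T i j = 0
  subdiagonal_nonneg : ∀ i : Fin m, 0 ≤ T i.succ i.castSucc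
  inner_eq_zero : ∀ j, inner ℂ (v j) w = 0
  map_apply : ∀ j, A (v j) = ∑ i, (T i j : ℂ) • v i + if j = Fin.last m then w else 0

namespace IsLanczosDecomposition

variable {A : E →L[ℂ] E} {v : Fin (m + 1) → E} {T : Matrix (Fin (m + 1)) (Fin (m + 1)) ℝ} {w : E}

theorem map_ritzVector (h : IsLanczosDecomposition A v T w) (l : Fin (m + 1)) :
    A (ritzVector h.isHermitian v l) =
      (h.isHermitian.eigenvalues l : ℂ) • ritzVector h.isHermitian v l +
        (h.isHermitian.eigenvectorBasis l (Fin.last m) : ℂ) • w := by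
  rw [← sum_eigenvectorBasis_smul_sum, ritzVector, map_sum]
  simp only [map_smul, h.map_apply, smul_add, smul_ite, smul_zero, Finset.sum_add_distrib,
    Finset.sum_ite_eq', Finset.mem_univ, if_true]

theorem apply_eq_apply_swap (h : IsLanczosDecomposition A v T w) (i j : Fin (m + 1)) :
    T i j = T j i := by
  simpa using h.isHermitian.apply j i

theorem alternating_smul_apply_nonpos (h : IsLanczosDecomposition A v T w) (i j : Fin (m + 1))
    (hij : i ≠ j) : (((-1) ^ (i : ℕ) * (-1) ^ (j : ℕ) : ℤˣ)) • T i j ≤ 0 := by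
  wlog hlt : j < i generalizing i j
  · rw [h.apply_eq_apply_swap, mul_comm]
    exact this j i hij.symm (lt_of_le_of_ne (not_lt.1 hlt) hij)
  obtain hnear | hfar : (i : ℕ) = j + 1 ∨ 1 < ((i : ℤ) - (j : ℤ)).natAbs := by omega
  · have hjm : (j : ℕ) < m := by omega
    obtain ⟨l, rfl⟩ : ∃ l : Fin m, l.castSucc = j := ⟨⟨j, hjm⟩, rfl⟩
    obtain rfl : i = l.succ := Fin.ext hnear
    simpa [pow_succ, ← mul_pow] using h.subdiagonal_nonneg l
  · rw [h.tridiagonal i j hfar, smul_zero]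

theorem pow_apply_mem_span (h : IsLanczosDecomposition A v T w) (j : Fin (m + 1)) :
    (A ^ (j : ℕ)) (v 0) ∈ Submodule.span ℂ (v '' Set.Iic j) := by
  induction j using Fin.induction with
  | zero => exact Submodule.subset_span ⟨0, by simp⟩
  | succ j ih =>
    rw [Fin.val_succ, pow_succ']
    refine Submodule.span_induction (p := fun x _ => A x ∈ Submodule.span ℂ (v '' Set.Iic j.succ))
      ?_ (by simp) (fun x y _ _ hx hy => by simpa using add_mem hx hy)
      (fun c x _ hx => by simpa using Submodule.smul_mem _ c hx) ih
    rintro _ ⟨i, hi, rfl⟩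
    have hi_le : (i : ℕ) ≤ j := hi
    rw [h.map_apply, if_neg (by rintro rfl; simp at hi_le; omega), add_zero]
    refine Submodule.sum_mem _ fun l _ => ?_
    by_cases hl : l ≤ j.succ
    · exact Submodule.smul_mem _ _ (Submodule.subset_span ⟨l, hl, rfl⟩)
    · have hl_lt : (j : ℕ) + 1 < l := not_le.1 hl
      rw [h.tridiagonal l i (by omega)]
      simp

theorem map_sum_inv_smul (h : IsLanczosDecomposition A v T w) (hT : IsUnit T.det)
    (j : Fin (m + 1)) :
    A (∑ i, ((T⁻¹ i j : ℝ) : ℂ) • v i) = v j + ((T⁻¹ (Fin.last m) j : ℝ) : ℂ) • w := by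
  have hentry (i : Fin (m + 1)) :
      ∑ l, ((T⁻¹ l j : ℝ) : ℂ) * T i l = if i = j then 1 else 0 := by
    have := congrFun₂ (T.mul_nonsing_inv hT) i j
    rw [mul_apply, one_apply] at this
    rw [← Complex.ofReal_one, ← Complex.ofReal_zero, ← apply_ite, ← this]
    simp [mul_comm]
  simp only [map_sum, map_smul, h.map_apply, smul_add, smul_ite, smul_zero,
    Finset.sum_add_distrib, Finset.sum_ite_eq', Finset.mem_univ, if_true, Finset.smul_sum,
    smul_smul]
  rw [Finset.sum_comm]
  simp only [← Finset.sum_smul, hentry, ite_smul, one_smul, zero_smul, Finset.sum_ite_eq',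
    Finset.mem_univ, if_true]

theorem mem_orthogonal (h : IsLanczosDecomposition A v T w) :
    w ∈ (Submodule.span ℂ (Set.range v))ᗮ := by
  rw [Submodule.mem_orthogonal]
  intro u hu
  induction hu using Submodule.span_induction with
  | mem x hx =>
    obtain ⟨j, rfl⟩ := hx
    exact h.inner_eq_zero j
  | zero => exact inner_zero_left _
  | add x y _ _ hx hy => rw [inner_add_left, hx, hy, add_zero]
  | smul c x _ hx => rw [inner_smul_left, hx, mul_zero]

variable [CompleteSpace E] {Q : (E →L[ℂ] E)ˣ}

theorem eigenvalues_pos (h : IsLanczosDecomposition ((Q : E →L[ℂ] E) ^ 2) v T w)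
    (hQ : IsSelfAdjoint (Q : E →L[ℂ] E)) (l : Fin (m + 1)) :
    0 < h.isHermitian.eigenvalues l := by
  set u := ritzVector h.isHermitian v l
  have hu : 0 < ‖u‖ := norm_pos_iff.2 (ritzVector_ne_zero _ h.orthonormal.linearIndependent l)
  have hu_mem : u ∈ Submodule.span ℂ (Set.range v) :=
    Submodule.sum_mem _ fun i _ => Submodule.smul_mem _ _ (Submodule.subset_span ⟨i, rfl⟩)
  have hQu : 0 < ‖(Q : E →L[ℂ] E) u‖ := norm_pos_iff.2 fun h0 => hu.ne' <| by
    rw [← inv_apply_apply (Q := Q) u, h0, map_zero, norm_zero]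
  have hrayleigh : h.isHermitian.eigenvalues l * ‖u‖ ^ 2 = ‖(Q : E →L[ℂ] E) u‖ ^ 2 := by
    have hinner : inner ℂ u (((Q : E →L[ℂ] E) ^ 2) u) = h.isHermitian.eigenvalues l * ‖u‖ ^ 2 := by
      rw [h.map_ritzVector, inner_add_right, inner_smul_right, inner_smul_right,
        Submodule.inner_right_of_mem_orthogonal hu_mem h.mem_orthogonal, mul_zero, add_zero,
        inner_self_eq_norm_sq_to_K]
      rfl
    have hsymm : inner ℂ u (((Q : E →L[ℂ] E) ^ 2) u) = ‖(Q : E →L[ℂ] E) u‖ ^ 2 :=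
      calc _ = inner ℂ ((Q : E →L[ℂ] E) u) ((Q : E →L[ℂ] E) u) := by
            rw [sq]
            exact (hQ.isSymmetric _ _).symm
        _ = _ := inner_self_eq_norm_sq_to_K _
    exact_mod_cast hinner.symm.trans hsymm
  exact pos_of_mul_pos_left (hrayleigh ▸ pow_pos hQu 2) (sq_nonneg _)

theorem cfc_sign_apply_sub_eq (h : IsLanczosDecomposition ((Q : E →L[ℂ] E) ^ 2) v T w)
    (hQ : IsSelfAdjoint (Q : E →L[ℂ] E)) (j : Fin (m + 1)) :
    cfc Real.sign (Q : E →L[ℂ] E) (v j) -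
        (Q : E →L[ℂ] E) (∑ i, (h.isHermitian.cfc (fun t => (√t)⁻¹) i j : ℂ) • v i) =
      -cfc (fun x => Real.sign x *
        h.isHermitian.cfc (fun t => (√t * (|x| + √t))⁻¹) (Fin.last m) j) (Q : E →L[ℂ] E) w := by
  set t := h.isHermitian.eigenvalues
  set U := h.isHermitian.eigenvectorBasis
  set g := fun l x => Real.sign x * (√(t l) * (|x| + √(t l)))⁻¹ with hg
  have hcont (l : Fin (m + 1)) : ContinuousOn (g l) (spectrum ℝ (Q : E →L[ℂ] E)) :=
    continuousOn_sign_mul_inv_spectrum (h.eigenvalues_pos hQ l)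
  have hritz (l : Fin (m + 1)) :
      cfc Real.sign (Q : E →L[ℂ] E) (ritzVector h.isHermitian v l) -
          (√(t l))⁻¹ • (Q : E →L[ℂ] E) (ritzVector h.isHermitian v l) =
        -(U l (Fin.last m) • cfc (g l) (Q : E →L[ℂ] E) w) := by
    rw [cfc_sign_apply_sub_inv_sqrt_smul hQ (h.eigenvalues_pos hQ l), h.map_ritzVector,
      Complex.coe_smul, sub_add_cancel_left, map_neg, map_smul, Complex.coe_smul]
  have hsum : cfc (fun x => Real.sign x *
      h.isHermitian.cfc (fun t => (√t * (|x| + √t))⁻¹) (Fin.last m) j) (Q : E →L[ℂ] E) =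
        ∑ l, (U l (Fin.last m) * U l j) • cfc (g l) (Q : E →L[ℂ] E) := by
    simp only [← cfc_const_mul _ _ _ (hcont _)]
    rw [← cfc_sum_univ _ _ fun l => (hcont l).const_mul _]
    congr 1
    ext x
    simp only [cfc_eq_spectralHom, spectralHom_apply, Finset.mul_sum, Finset.sum_apply, hg]
    exact Finset.sum_congr rfl fun l _ => by ring
  nth_rw 1 [← sum_eigenvectorBasis_smul_ritzVector h.isHermitian v j]
  rw [cfc_eq_spectralHom, sum_spectralHom_smul, hsum, map_sum, map_sum, ← Finset.sum_sub_distrib,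
    _root_.sum_apply, ← Finset.sum_neg_distrib]
  refine Finset.sum_congr rfl fun l _ => ?_
  rw [map_smul, map_smul, Complex.coe_smul, Complex.coe_smul, mul_comm, mul_smul, ← smul_sub,
    hritz, smul_neg, _root_.smul_apply, mul_comm, mul_smul]

theorem isUnit_det (h : IsLanczosDecomposition ((Q : E →L[ℂ] E) ^ 2) v T w)
    (hQ : IsSelfAdjoint (Q : E →L[ℂ] E)) : IsUnit T.det := by
  rw [h.isHermitian.det_eq_prod_eigenvalues]
  exact (Finset.prod_ne_zero_iff.2 fun l _ => by exact_mod_cast (h.eigenvalues_pos hQ l).ne').isUnit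

theorem sub_map_sum_inv_smul (h : IsLanczosDecomposition ((Q : E →L[ℂ] E) ^ 2) v T w)
    (hQ : IsSelfAdjoint (Q : E →L[ℂ] E)) (j : Fin (m + 1)) :
    v j - ((Q : E →L[ℂ] E) ^ 2) (∑ i, ((T⁻¹ i j : ℝ) : ℂ) • v i) =
      -(((T⁻¹ (Fin.last m) j : ℝ) : ℂ) • w) := by
  rw [h.map_sum_inv_smul (h.isUnit_det hQ), sub_add_cancel_left]

theorem norm_cfc_sign_apply_sub_le (h : IsLanczosDecomposition ((Q : E →L[ℂ] E) ^ 2) v T w)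
    (hQ : IsSelfAdjoint (Q : E →L[ℂ] E)) (j : Fin (m + 1)) :
    ‖cfc Real.sign (Q : E →L[ℂ] E) (v j) -
        (Q : E →L[ℂ] E) (∑ i, (h.isHermitian.cfc (fun t => (√t)⁻¹) i j : ℂ) • v i)‖ ≤
      ‖v j - ((Q : E →L[ℂ] E) ^ 2) (∑ i, ((T⁻¹ i j : ℝ) : ℂ) • v i)‖ := by
  rw [h.cfc_sign_apply_sub_eq hQ, h.sub_map_sum_inv_smul hQ, norm_neg, norm_neg, norm_smul,
    Complex.norm_real]
  refine ContinuousLinearMap.le_of_opNorm_le _ (norm_cfc_le (norm_nonneg _) fun x _ => ?_) w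
  rw [norm_mul, Real.norm_eq_abs, Real.norm_eq_abs]
  exact (mul_le_of_le_one_left (abs_nonneg _) (abs_sign_le_one x)).trans <|
    abs_cfc_inv_sqrt_mul_add_sqrt_apply_le (h.eigenvalues_pos hQ) h.alternating_smul_apply_nonpos
      (abs_nonneg x) _ _

theorem norm_sub_map_sum_inv_smul_le (h : IsLanczosDecomposition ((Q : E →L[ℂ] E) ^ 2) v T w)
    (hQ : IsSelfAdjoint (Q : E →L[ℂ] E)) :
    ‖v 0 - ((Q : E →L[ℂ] E) ^ 2) (∑ i, ((T⁻¹ i 0 : ℝ) : ℂ) • v i)‖ ≤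
      2 * condNumber Q * ((condNumber Q - 1) / (condNumber Q + 1)) ^ (m + 1) := by
  have hv_norm : ‖v 0‖ = 1 := h.orthonormal.1 0
  have hv_mem (i : Fin (m + 1)) : v i ∈ Submodule.span ℂ (Set.range v) :=
    Submodule.subset_span ⟨i, rfl⟩
  have hres := norm_residual_le (b := v 0) (K := Submodule.span ℂ (Set.range v)) hQ m.succ_pos
    (fun j hj => Submodule.span_mono (Set.image_subset_range _ _) (h.pow_apply_mem_span ⟨j, hj⟩))
    (Submodule.sum_mem _ fun i _ => Submodule.smul_mem _ ((T⁻¹ i 0 : ℝ) : ℂ) (hv_mem i))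
    (by rw [h.sub_map_sum_inv_smul hQ, ← smul_neg]
        exact Submodule.smul_mem _ _ (Submodule.neg_mem _ h.mem_orthogonal))
  rwa [hv_norm, mul_one] at hres

end IsLanczosDecomposition

end Lanczos

theorem lanczos_sign_error_bound_general {E : Type*} [NormedAddCommGroup E]
    [InnerProductSpace ℂ E] [CompleteSpace E] {Q : (E →L[ℂ] E)ˣ}
    (hQ : IsSelfAdjoint (Q : E →L[ℂ] E)) {m : ℕ} {v : Fin (m + 1) → E}
    {T : Matrix (Fin (m + 1)) (Fin (m + 1)) ℝ} {w : E}
    (h : IsLanczosDecomposition ((Q : E →L[ℂ] E) ^ 2) v T w) {b r : E}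
    (hb : b = (‖b‖ : ℂ) • v 0)
    (hr : r = b - (‖b‖ : ℂ) • ((Q : E →L[ℂ] E) ^ 2) (∑ i, ((T⁻¹ i 0 : ℝ) : ℂ) • v i)) :
    ‖cfc Real.sign (Q : E →L[ℂ] E) b - (‖b‖ : ℂ) • (Q : E →L[ℂ] E)
        (∑ i, (h.isHermitian.cfc (fun t => (√t)⁻¹) i 0 : ℂ) • v i)‖ ≤ ‖r‖ ∧
      ‖r‖ ≤ 2 * condNumber Q * ((condNumber Q - 1) / (condNumber Q + 1)) ^ (m + 1) * ‖b‖ := by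
  have hscale (S : E →L[ℂ] E) (x : E) :
      ‖S b - (‖b‖ : ℂ) • x‖ = ‖b‖ * ‖S (v 0) - x‖ := by
    have hSb : S b = (‖b‖ : ℂ) • S (v 0) := by rw [← map_smul, ← hb]
    rw [hSb, ← smul_sub, norm_smul, Complex.norm_real, norm_norm]
  have hr_norm := hscale 1 (((Q : E →L[ℂ] E) ^ 2) (∑ i, ((T⁻¹ i 0 : ℝ) : ℂ) • v i))
  rw [one_apply_eq_self, one_apply_eq_self, ← hr] at hr_norm
  rw [hscale, hr_norm, mul_comm _ ‖b‖]
  exact ⟨by gcongr; exact h.norm_cfc_sign_apply_sub_le hQ 0,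
    by gcongr; exact h.norm_sub_map_sum_inv_smul_le hQ⟩

/-! ### Matrices as operators on Euclidean space -/

section Euclidean

open WithLp

variable {n k : ℕ}

theorem e2norm_eq_norm (x : Fin n → ℂ) : e2norm x = ‖toLp 2 x‖ :=
  (EuclideanSpace.norm_eq _).symm

/-- An invertible matrix as an invertible operator on Euclidean space. -/
noncomputable def euclideanUnit (Q : Matrix (Fin n) (Fin n) ℂ) (h : IsUnit Q.det) :
    (EuclideanSpace ℂ (Fin n) →L[ℂ] EuclideanSpace ℂ (Fin n))ˣ :=
  Units.map (Matrix.toEuclideanCLM (n := Fin n) (𝕜 := ℂ) : _ →* _) (Q.nonsingInvUnit h)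

variable {Q : Matrix (Fin n) (Fin n) ℂ} (hQinv : IsUnit Q.det)

theorem coe_euclideanUnit :
    (euclideanUnit Q hQinv : EuclideanSpace ℂ (Fin n) →L[ℂ] EuclideanSpace ℂ (Fin n)) =
      Matrix.toEuclideanCLM (𝕜 := ℂ) Q := rfl

theorem condNumber_euclideanUnit :
    condNumber (euclideanUnit Q hQinv) = specNorm Q * specNorm Q⁻¹ := rfl

theorem isSelfAdjoint_toEuclideanCLM (hQ : Q.IsHermitian) :
    IsSelfAdjoint (Matrix.toEuclideanCLM (𝕜 := ℂ) Q) :=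
  hQ.isSelfAdjoint.map (Matrix.toEuclideanCLM (𝕜 := ℂ))

theorem isSelfAdjoint_euclideanUnit (hQ : Q.IsHermitian) :
    IsSelfAdjoint
      (euclideanUnit Q hQinv : EuclideanSpace ℂ (Fin n) →L[ℂ] EuclideanSpace ℂ (Fin n)) := by
  rw [coe_euclideanUnit]
  exact isSelfAdjoint_toEuclideanCLM hQ

theorem toEuclideanCLM_cfc_s6 (hQ : Q.IsHermitian) (f : ℝ → ℝ) :
    Matrix.toEuclideanCLM (𝕜 := ℂ) (hQ.cfc f) = cfc f (Matrix.toEuclideanCLM (𝕜 := ℂ) Q) := by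
  have hcont := (Matrix.toEuclideanCLM (n := Fin n)
    (𝕜 := ℂ)).toAlgEquiv.toLinearMap.continuous_of_finiteDimensional
  rw [← hQ.cfc_eq]
  exact StarAlgHomClass.map_cfc (S := ℂ) (Matrix.toEuclideanCLM (n := Fin n) (𝕜 := ℂ)) f Q
    (Q.finite_real_spectrum.continuousOn f) hcont hQ.isSelfAdjoint (isSelfAdjoint_toEuclideanCLM hQ)

theorem toLp_mulVec_eq_sum (V : Matrix (Fin n) (Fin k) ℂ) (c : Fin k → ℂ) :
    toLp 2 (V *ᵥ c) = ∑ i, c i • toLp 2 (V.col i) := by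
  rw [Matrix.mulVec_eq_sum]
  simp [Matrix.col]

theorem toLp_mulVec_mulVec_single (V : Matrix (Fin n) (Fin k) ℂ) (M : Matrix (Fin k) (Fin k) ℝ)
    (j : Fin k) :
    toLp 2 (V *ᵥ (M.map (algebraMap ℝ ℂ) *ᵥ Pi.single j 1)) =
      ∑ i, (M i j : ℂ) • toLp 2 (V.col i) := by
  rw [mulVec_single_one, toLp_mulVec_eq_sum]
  rfl

theorem orthonormal_toLp_col {V : Matrix (Fin n) (Fin k) ℂ} (hV : Vᴴ * V = 1) :
    Orthonormal ℂ fun j => toLp 2 (V.col j) := by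
  rw [orthonormal_iff_ite]
  intro i j
  rw [← Matrix.one_apply, ← hV, EuclideanSpace.inner_toLp_toLp, dotProduct_comm]
  rfl

theorem inner_toLp_col_eq_zero {V : Matrix (Fin n) (Fin k) ℂ} {x : Fin n → ℂ}
    (hx : star x ᵥ* V = 0) (j : Fin k) : inner ℂ (toLp 2 (V.col j)) (toLp 2 x) = 0 := by
  rw [inner_eq_zero_symm, EuclideanSpace.inner_toLp_toLp, dotProduct_comm]
  exact congrFun hx j

variable {m : ℕ}
  {A : Matrix (Fin n) (Fin n) ℂ} {V : Matrix (Fin n) (Fin (m + 1)) ℂ}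
  {T : Matrix (Fin (m + 1)) (Fin (m + 1)) ℝ} {β : ℂ} {x : Fin n → ℂ}

theorem toEuclideanCLM_toLp_col
    (hrel : A * V = V * T.map (algebraMap ℝ ℂ) + β • vecMulVec x (Pi.single (Fin.last m) 1))
    (j : Fin (m + 1)) :
    Matrix.toEuclideanCLM (𝕜 := ℂ) A (toLp 2 (V.col j)) =
      ∑ i, (T i j : ℂ) • toLp 2 (V.col i) + if j = Fin.last m then toLp 2 (β • x) else 0 := by
  have hcol := congr(toLp 2 ($hrel *ᵥ Pi.single j 1))
  rw [← mulVec_mulVec, add_mulVec, ← mulVec_mulVec, mulVec_single_one, mulVec_single_one,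
    toLp_add, toLp_mulVec_eq_sum V] at hcol
  rw [Matrix.toEuclideanCLM_toLp, hcol]
  congr 1
  rw [mulVec_single_one]
  split_ifs with h <;> ext i <;> simp [vecMulVec_apply, h]

theorem isLanczosDecomposition_toEuclideanCLM (hV : Vᴴ * V = 1) (hT : T.IsHermitian)
    (htri : ∀ i j : Fin (m + 1), 1 < ((i : ℤ) - (j : ℤ)).natAbs → T i j = 0)
    (hsub : ∀ i : Fin m, 0 ≤ T i.succ i.castSucc) (hx : star x ᵥ* V = 0)
    (hrel : A * V = V * T.map (algebraMap ℝ ℂ) + β • vecMulVec x (Pi.single (Fin.last m) 1)) :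
    IsLanczosDecomposition (Matrix.toEuclideanCLM (𝕜 := ℂ) A) (fun j => toLp 2 (V.col j)) T
      (toLp 2 (β • x)) where
  orthonormal := orthonormal_toLp_col hV
  isHermitian := hT
  tridiagonal := htri
  subdiagonal_nonneg := hsub
  inner_eq_zero j := by
    rw [toLp_smul, inner_smul_right, inner_toLp_col_eq_zero hx, mul_zero]
  map_apply := toEuclideanCLM_toLp_col hrel

end Euclidean

/-- Error bound for the Lanczos (on `Q²`) approximation of `sign(Q)b`:
with the Lanczos relation `Q² V̂ = V̂ T̂ + β̂ v̂ e_kᵀ` (orthonormal `V̂` with first column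
`b/‖b‖₂`, real symmetric tridiagonal `T̂` with positive subdiagonal, `β̂ > 0`, `v̂` a unit
vector orthogonal to the columns of `V̂`) and `r_k = b − Q² V̂ T̂⁻¹ e₁ ‖b‖₂` the CG residual
for `Q²x = b`, one has
`‖sign(Q)b − Q V̂ T̂^{-1/2} e₁ ‖b‖₂‖ ≤ ‖r_k‖ ≤ 2κ((κ-1)/(κ+1))^k ‖b‖₂`,
where `κ = ‖Q‖₂ ‖Q⁻¹‖₂`. -/
theorem lanczos_sign_error_bound {n k : ℕ} (hk : 0 < k)
    (Q : Matrix (Fin n) (Fin n) ℂ) (hQ : Q.IsHermitian) (hQinv : IsUnit Q.det)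
    (b : Fin n → ℂ) (hb : b ≠ 0)
    (V : Matrix (Fin n) (Fin k) ℂ) (hVorth : Vᴴ * V = 1)
    (hV1 : V *ᵥ Pi.single (⟨0, hk⟩ : Fin k) 1 = (e2norm b : ℂ)⁻¹ • b)
    (T : Matrix (Fin k) (Fin k) ℝ) (hTsym : T.IsHermitian)
    (hTtri : ∀ i j : Fin k, 1 < ((i : ℤ) - (j : ℤ)).natAbs → T i j = 0)
    (hTsub : ∀ (i : ℕ) (h : i + 1 < k), 0 < T ⟨i + 1, h⟩ ⟨i, Nat.lt_of_succ_lt h⟩)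
    (βh : ℝ) (hβ : 0 < βh)
    (v : Fin n → ℂ) (hv : e2norm v = 1) (hvV : star v ᵥ* V = 0)
    (hrel : Q ^ 2 * V = V * T.map (algebraMap ℝ ℂ) +
      (βh : ℂ) • vecMulVec v (Pi.single (⟨k - 1, Nat.sub_lt hk one_pos⟩ : Fin k) 1))
    (r : Fin n → ℂ)
    (hr : r = b - (e2norm b : ℂ) •
      (Q ^ 2 *ᵥ (V *ᵥ ((T⁻¹.map (algebraMap ℝ ℂ)) *ᵥ Pi.single (⟨0, hk⟩ : Fin k) 1))))
    (κ : ℝ) (hκ : κ = specNorm Q * specNorm Q⁻¹) :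
    e2norm ((hQ.cfc Real.sign) *ᵥ b - (e2norm b : ℂ) •
        (Q *ᵥ (V *ᵥ (((hTsym.cfc fun t => (Real.sqrt t)⁻¹).map (algebraMap ℝ ℂ)) *ᵥ
          Pi.single (⟨0, hk⟩ : Fin k) 1)))) ≤ e2norm r ∧
      e2norm r ≤ 2 * κ * ((κ - 1) / (κ + 1)) ^ k * e2norm b := by
  obtain ⟨m, rfl⟩ := Nat.exists_eq_succ_of_ne_zero hk.ne'
  have hdecomp := isLanczosDecomposition_toEuclideanCLM hVorth hTsym hTtri
    (fun i => (hTsub i (Nat.succ_lt_succ i.isLt)).le) hvV hrel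
  rw [map_pow, ← coe_euclideanUnit hQinv] at hdecomp
  have hbV : WithLp.toLp 2 b = (‖WithLp.toLp 2 b‖ : ℂ) • WithLp.toLp 2 (V.col 0) := by
    rw [← e2norm_eq_norm, ← WithLp.toLp_smul, ← mulVec_single_one]
    have hb_norm : (e2norm b : ℂ) ≠ 0 := by simpa [e2norm_eq_norm] using hb
    exact congrArg (WithLp.toLp 2) (hV1 ▸ smul_inv_smul₀ hb_norm b).symm
  have hres : WithLp.toLp 2 r = WithLp.toLp 2 b - (‖WithLp.toLp 2 b‖ : ℂ) •
      ((euclideanUnit Q hQinv : EuclideanSpace ℂ (Fin n) →L[ℂ] _) ^ 2)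
        (∑ i, ((T⁻¹ i 0 : ℝ) : ℂ) • WithLp.toLp 2 (V.col i)) := by
    rw [← toLp_mulVec_mulVec_single, coe_euclideanUnit, ← map_pow, Matrix.toEuclideanCLM_toLp,
      ← e2norm_eq_norm, hr]
    rfl
  rw [e2norm_eq_norm (_ - _), WithLp.toLp_sub, WithLp.toLp_smul,
    ← Matrix.toEuclideanCLM_toLp (hQ.cfc _), ← Matrix.toEuclideanCLM_toLp Q,
    toEuclideanCLM_cfc_s6 hQ, toLp_mulVec_mulVec_single, ← coe_euclideanUnit hQinv, e2norm_eq_norm,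
    e2norm_eq_norm, hκ, ← condNumber_euclideanUnit hQinv]
  exact lanczos_sign_error_bound_general (isSelfAdjoint_euclideanUnit hQinv hQ) hdecomp hbV hres
end

section
/- Let A be an n×n Hermitian positive definite complex matrix. Then A^{−1/2} = (2/π) ∫₀^∞ (A + t² I)^{−1} dt, where the integral is the (entrywise / Bochner) improper integral over t ∈ [0, ∞) of the matrix-valued function t ↦ (A + t² I)^{−1}. -/
/-!
The scalar identity `∫₀^∞ (x + t²)⁻¹ dt = (π / 2) x^(-1/2)`, for `x > 0`, is applied to `A` by
the continuous functional calculus. The calculus may be exchanged with the integral because the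
spectrum of `A` is bounded below by some `c > 0`, so that `(c + t²)⁻¹` dominates the integrand
uniformly on the spectrum.
-/

open Matrix MeasureTheory
open scoped ComplexOrder

section Scalar

variable {x : ℝ}

lemma inv_add_sq_eq (hx : 0 < x) (t : ℝ) :
    (x + t ^ 2)⁻¹ = x⁻¹ * (1 + ((√x)⁻¹ * t) ^ 2)⁻¹ := by
  rw [mul_pow, inv_pow, Real.sq_sqrt hx.le]
  field_simp

lemma integrable_inv_add_sq (hx : 0 < x) : Integrable fun t : ℝ => (x + t ^ 2)⁻¹ := by
  simp only [inv_add_sq_eq hx]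
  exact (integrable_inv_one_add_sq.comp_mul_left' (by positivity)).const_mul _

lemma integral_Ioi_inv_add_sq (hx : 0 < x) :
    ∫ t in Set.Ioi (0 : ℝ), (x + t ^ 2)⁻¹ = Real.pi / 2 * x ^ (-1 / 2 : ℝ) := by
  have rpow_eq : x ^ (-1 / 2 : ℝ) = x⁻¹ * √x := by
    rw [Real.sqrt_eq_rpow, ← Real.rpow_neg_one, ← Real.rpow_add hx]
    norm_num
  simp only [inv_add_sq_eq hx]
  rw [integral_const_mul,
    integral_comp_mul_left_Ioi (fun s : ℝ => (1 + s ^ 2)⁻¹) 0 (by positivity), mul_zero,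
    integral_Ioi_inv_one_add_sq, Real.arctan_zero, sub_zero, inv_inv, smul_eq_mul, rpow_eq]
  ring

lemma norm_inv_add_sq_le {c : ℝ} (hc : 0 < c) (hcx : c ≤ x) (t : ℝ) :
    ‖(x + t ^ 2)⁻¹‖ ≤ (c + t ^ 2)⁻¹ := by
  have hx : 0 < x := hc.trans_le hcx
  rw [Real.norm_of_nonneg (by positivity)]
  gcongr

lemma continuousOn_uncurry_inv_add_sq {s u : Set ℝ} (hu : ∀ x ∈ u, 0 < x) :
    ContinuousOn (Function.uncurry fun t x : ℝ => (x + t ^ 2)⁻¹) (s ×ˢ u) := by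
  refine ContinuousOn.inv₀ (by fun_prop) fun p hp => ?_
  have := hu p.2 hp.2
  positivity

end Scalar

section ContinuousFunctionalCalculus

variable {𝔸 : Type*} [NormedRing 𝔸] [StarRing 𝔸] [NormedAlgebra ℝ 𝔸]
  [ContinuousFunctionalCalculus ℝ 𝔸 IsSelfAdjoint] [PartialOrder 𝔸]
  [NonnegSpectrumClass ℝ 𝔸] {a b : 𝔸}

lemma exists_pos_forall_mem_spectrum_le (ha : IsStrictlyPositive a) :
    ∃ c : ℝ, 0 < c ∧ ∀ x ∈ spectrum ℝ a, c ≤ x :=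
  (ContinuousFunctionalCalculus.isCompact_spectrum (R := ℝ) a).exists_forall_le'
    continuousOn_id fun _ => ha.spectrum_pos

variable [StarOrderedRing 𝔸]

lemma cfc_inv_add_sq (ha : IsStrictlyPositive a) (t : ℝ) :
    cfc (fun x : ℝ => (x + t ^ 2)⁻¹) a = Ring.inverse (a + algebraMap ℝ 𝔸 (t ^ 2)) := by
  have ne_zero : ∀ x ∈ spectrum ℝ a, x + t ^ 2 ≠ 0 := fun x hx => by
    have := ha.spectrum_pos hx
    positivity
  rw [cfc_inv _ a ne_zero, cfc_add_const _ _ a, cfc_id' ℝ a]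

lemma eq_rpow_neg_one_half_of_mul_self (ha : IsStrictlyPositive a) (hb : 0 ≤ b)
    (hbsq : b * b = Ring.inverse a) : b = a ^ (-1 / 2 : ℝ) := by
  rw [← CFC.sqrt_unique hbsq hb, CFC.inverse_eq_rpow_neg_one ha,
    CFC.sqrt_rpow ha.isUnit (by norm_num)]

variable [CompleteSpace 𝔸]

lemma integrableOn_ringInverse_add_sq (ha : IsStrictlyPositive a) :
    IntegrableOn (fun t : ℝ => Ring.inverse (a + algebraMap ℝ 𝔸 (t ^ 2))) (Set.Ioi 0) := by
  obtain ⟨c, hc, hca⟩ := exists_pos_forall_mem_spectrum_le ha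
  simp only [← cfc_inv_add_sq ha]
  exact integrableOn_cfc measurableSet_Ioi _ (fun t => (c + t ^ 2)⁻¹) a
    (continuousOn_uncurry_inv_add_sq fun x => ha.spectrum_pos)
    (.of_forall fun t x hx => norm_inv_add_sq_le hc (hca x hx) t)
    (integrable_inv_add_sq hc).integrableOn.2

theorem integral_ringInverse_add_sq (ha : IsStrictlyPositive a) :
    ∫ t in Set.Ioi (0 : ℝ), Ring.inverse (a + algebraMap ℝ 𝔸 (t ^ 2)) =
      (Real.pi / 2) • a ^ (-1 / 2 : ℝ) := by
  obtain ⟨c, hc, hca⟩ := exists_pos_forall_mem_spectrum_le ha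
  calc ∫ t in Set.Ioi (0 : ℝ), Ring.inverse (a + algebraMap ℝ 𝔸 (t ^ 2))
    _ = ∫ t in Set.Ioi (0 : ℝ), cfc (fun x : ℝ => (x + t ^ 2)⁻¹) a := by
      simp only [cfc_inv_add_sq ha]
    _ = cfc (fun x : ℝ => ∫ t in Set.Ioi (0 : ℝ), (x + t ^ 2)⁻¹) a :=
      (cfc_setIntegral measurableSet_Ioi _ (fun t => (c + t ^ 2)⁻¹) a
        (continuousOn_uncurry_inv_add_sq fun x => ha.spectrum_pos)
        (.of_forall fun t x hx => norm_inv_add_sq_le hc (hca x hx) t)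
        (integrable_inv_add_sq hc).integrableOn.2).symm
    _ = cfc (fun x : ℝ => Real.pi / 2 * x ^ (-1 / 2 : ℝ)) a :=
      cfc_congr fun x hx => integral_Ioi_inv_add_sq (ha.spectrum_pos hx)
    _ = (Real.pi / 2) • a ^ (-1 / 2 : ℝ) := by
      have continuousOn_rpow : ContinuousOn (fun x : ℝ => x ^ (-1 / 2 : ℝ)) (spectrum ℝ a) :=
        continuousOn_id.rpow_const fun x hx => .inl (ha.spectrum_pos hx).ne'
      rw [cfc_const_mul _ _ a, CFC.rpow_eq_cfc_real]

theorem eq_two_div_pi_smul_integral_ringInverse_add_sq (ha : IsStrictlyPositive a) (hb : 0 ≤ b)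
    (hbsq : b * b = Ring.inverse a) :
    b = (2 / Real.pi) •
      ∫ t in Set.Ioi (0 : ℝ), Ring.inverse (a + algebraMap ℝ 𝔸 (t ^ 2)) := by
  have two_div_pi_mul : 2 / Real.pi * (Real.pi / 2) = 1 := by
    field_simp
  rw [integral_ringInverse_add_sq ha, smul_smul, two_div_pi_mul, one_smul,
    eq_rpow_neg_one_half_of_mul_self ha hb hbsq]

end ContinuousFunctionalCalculus

section Matrix

open scoped MatrixOrder Matrix.Norms.L2Operator

variable {𝕜 n : Type*} [RCLike 𝕜] [Fintype n] [DecidableEq n]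

/-- The real normed algebra structure underlying `Matrix.instL2OpNormedAlgebra`, needed for
Bochner integrals. It extends the entrywise real algebra structure `Matrix.instAlgebra`, the one
carrying the continuous functional calculus, rather than restricting scalars along `ℝ → 𝕜`. -/
noncomputable abbrev l2OpRealNormedAlgebra : NormedAlgebra ℝ (Matrix n n 𝕜) where
  norm_smul_le r M := by
    rw [RCLike.real_smul_eq_coe_smul (K := 𝕜) r M, ← norm_algebraMap' 𝕜 r]
    exact norm_smul_le (r : 𝕜) M

attribute [local instance] l2OpRealNormedAlgebra

lemma integral_matrix_apply {X : Type*} [MeasurableSpace X] {μ : Measure X}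
    {f : X → Matrix n n 𝕜} (hf : Integrable f μ) (i j : n) :
    (∫ x, f x ∂μ) i j = ∫ x, f x i j ∂μ :=
  ((entryLinearMap 𝕜 𝕜 i j).toContinuousLinearMap.integral_comp_comm hf).symm

theorem inv_sqrt_integral_representation_general {A B : Matrix n n 𝕜} (hA : A.PosDef)
    (hB : B.PosSemidef) (hBsq : B * B = A⁻¹) (i j : n) :
    B i j = (2 / Real.pi : ℝ) *
      ∫ t in Set.Ioi (0 : ℝ), (A + ((t : 𝕜) ^ 2) • 1)⁻¹ i j := by
  have resolvent_eq (t : ℝ) : (A + ((t : 𝕜) ^ 2) • 1)⁻¹ =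
      Ring.inverse (A + algebraMap ℝ (Matrix n n 𝕜) (t ^ 2)) := by
    rw [nonsing_inv_eq_ringInverse, Algebra.algebraMap_eq_smul_one,
      RCLike.real_smul_eq_coe_smul (K := 𝕜), RCLike.ofReal_pow]
  have hBeq := eq_two_div_pi_smul_integral_ringInverse_add_sq hA.isStrictlyPositive hB.nonneg
    (hBsq.trans (nonsing_inv_eq_ringInverse A))
  simp only [resolvent_eq]
  rw [← integral_matrix_apply (integrableOn_ringInverse_add_sq hA.isStrictlyPositive),
    ← RCLike.real_smul_eq_coe_mul, ← Matrix.smul_apply, ← hBeq]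

end Matrix

/-- Integral representation of the inverse square root of a Hermitian
positive definite matrix: if `B` is the (unique) Hermitian positive definite matrix with
`B² = A⁻¹`, i.e. `B = A^{-1/2}`, then (entrywise)
`A^{-1/2} = (2/π) ∫₀^∞ (A + t² I)⁻¹ dt`. -/
theorem inv_sqrt_integral_representation {n : ℕ}
    (A : Matrix (Fin n) (Fin n) ℂ) (hA : A.PosDef)
    (B : Matrix (Fin n) (Fin n) ℂ) (hB : B.PosDef) (hBsq : B * B = A⁻¹) :
    ∀ i j, B i j = (2 / Real.pi : ℂ) *
      ∫ t in Set.Ioi (0 : ℝ), (A + ((t : ℂ) ^ 2) • 1)⁻¹ i j := by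
  intro i j
  simpa using inv_sqrt_integral_representation_general hA hB.posSemidef hBsq i j
end

section
/- Let Q be an n×n invertible Hermitian complex matrix and let φ : [0, ∞) → ℝ be a measurable function with 0 ≤ φ(t) ≤ 1 for all t. Then the matrix X = (2/π) ∫₀^∞ Q (t² I + Q²)^{−1} φ(t) dt is well defined (the integrand is integrable) and satisfies ‖X‖₂ ≤ 1. -/
open Matrix MeasureTheory

/-!
For a self-adjoint `a` and `t > 0`, the element `a (t² + a²)⁻¹` is obtained by applying
`z ↦ z / (t² + z²)` to `a` in the continuous functional calculus. The calculus commutes with the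
integral over `t` once these functions are dominated on the spectrum by one integrable function of
`t`, and this is so when `0` is not an accumulation point of the spectrum, in particular for
matrices. The weighted integral is then itself a function of `a`, so its norm is at most the
supremum of that function over the spectrum, and `∫₀^∞ |x| / (t² + x²) dt ≤ π / 2` for real `x`.
-/

open Filter Set Topology

lemma div_sq_add_sq_eq {r : ℝ} (hr : r ≠ 0) (t : ℝ) :
    r / (t ^ 2 + r ^ 2) = r⁻¹ * (1 + (r⁻¹ * t) ^ 2)⁻¹ := by
  field_simp
  ring

lemma integrable_div_sq_add_sq (r : ℝ) : Integrable fun t : ℝ => r / (t ^ 2 + r ^ 2) := by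
  rcases eq_or_ne r 0 with rfl | hr
  · simp
  · simp only [div_sq_add_sq_eq hr]
    exact (integrable_inv_one_add_sq.comp_mul_left' (inv_ne_zero hr)).const_mul _

lemma integral_Ioi_div_sq_add_sq {r : ℝ} (hr : 0 < r) :
    ∫ t in Ioi (0 : ℝ), r / (t ^ 2 + r ^ 2) = Real.pi / 2 := by
  simp only [div_sq_add_sq_eq hr.ne']
  rw [integral_const_mul,
    integral_comp_mul_left_Ioi (fun x : ℝ => (1 + x ^ 2)⁻¹) 0 (inv_pos.mpr hr)]
  simp [integral_Ioi_inv_one_add_sq, hr.ne']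

lemma exists_integrable_forall_norm_div_sq_add_sq_le {E : Type*} [NormedAddCommGroup E] {S : Set E}
    (hS : Bornology.IsBounded S) (h0 : ¬ AccPt 0 (𝓟 S)) :
    ∃ g : ℝ → ℝ, Integrable g ∧ ∀ t, ∀ z ∈ S, ‖z‖ / (t ^ 2 + ‖z‖ ^ 2) ≤ g t := by
  obtain ⟨M, hM_pos, hM⟩ := hS.exists_pos_norm_le
  obtain ⟨δ, hδ_pos, hδ⟩ : ∃ δ > 0, ∀ z ∈ S, z ≠ 0 → δ ≤ ‖z‖ := by
    rw [accPt_iff_frequently, not_frequently, Metric.eventually_nhds_iff] at h0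
    obtain ⟨δ, hδ_pos, hδ⟩ := h0
    refine ⟨δ, hδ_pos, fun z hz hz0 => ?_⟩
    by_contra! hlt
    exact hδ (by rwa [dist_zero_right]) ⟨hz0, hz⟩
  refine ⟨fun t => M / δ * (δ / (t ^ 2 + δ ^ 2)),
    (integrable_div_sq_add_sq δ).const_mul _, fun t z hz => ?_⟩
  rcases eq_or_ne z 0 with rfl | hz0
  · rw [norm_zero, zero_div]
    positivity
  · calc ‖z‖ / (t ^ 2 + ‖z‖ ^ 2) ≤ M / (t ^ 2 + δ ^ 2) := by
          gcongr
          exacts [hM z hz, hδ z hz hz0]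
      _ = M / δ * (δ / (t ^ 2 + δ ^ 2)) := by field_simp

/-- The function of `z` whose value at a self-adjoint element `a` is `a (t² + a²)⁻¹`. It is taken
on all of `ℂ`, rather than on `ℝ`, so that it can be multiplied by complex weights inside the
functional calculus. -/
noncomputable def cauchyKernel (t : ℝ) (z : ℂ) : ℂ :=
  z / ((t : ℂ) ^ 2 + z ^ 2)

lemma norm_cauchyKernel_ofReal (t x : ℝ) :
    ‖cauchyKernel t x‖ = ‖(x : ℂ)‖ / (t ^ 2 + ‖(x : ℂ)‖ ^ 2) := by
  rw [cauchyKernel, norm_div, Complex.norm_real, Real.norm_eq_abs, sq_abs]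
  congr 1
  rw [← Complex.ofReal_pow, ← Complex.ofReal_pow, ← Complex.ofReal_add,
    Complex.norm_of_nonneg (by positivity)]

lemma norm_integral_mul_cauchyKernel_le {φ : ℝ → ℂ}
    (hφ : ∀ᵐ t ∂volume.restrict (Ioi 0), ‖φ t‖ ≤ 1) (x : ℝ) :
    ‖∫ t in Ioi (0 : ℝ), φ t * cauchyKernel t x‖ ≤ Real.pi / 2 := by
  rcases eq_or_ne x 0 with rfl | hx
  · simp only [cauchyKernel, Complex.ofReal_zero, zero_div, mul_zero, integral_zero, norm_zero]
    positivity
  · rw [← integral_Ioi_div_sq_add_sq (norm_pos_iff.mpr (Complex.ofReal_ne_zero.mpr hx))]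
    refine norm_integral_le_of_norm_le (integrable_div_sq_add_sq _).integrableOn ?_
    filter_upwards [hφ] with t ht
    rw [norm_mul, norm_cauchyKernel_ofReal]
    exact mul_le_of_le_one_left (by positivity) ht

section ContinuousMap

open ContinuousMap

lemma integrableOn_mkD_domRestrict_mul {X Y 𝕜 : Type*} [RCLike 𝕜] [TopologicalSpace X]
    [MeasurableSpace X] [OpensMeasurableSpace X] {μ : Measure X} [TopologicalSpace Y] {K : Set Y}
    [CompactSpace K] [SecondCountableTopologyEither X C(K, 𝕜)] {s : Set X} (hs : MeasurableSet s)
    {φ : X → 𝕜} (hφm : AEStronglyMeasurable φ (μ.restrict s)) {C : ℝ}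
    (hφ : ∀ᵐ x ∂μ.restrict s, ‖φ x‖ ≤ C) {f : X → Y → 𝕜}
    (hf : ContinuousOn (Function.uncurry f) (s ×ˢ K)) {g : X → ℝ} (hg : IntegrableOn g s μ)
    (hfg : ∀ x ∈ s, ∀ y ∈ K, ‖f x y‖ ≤ g x) :
    IntegrableOn (fun x => mkD (K.domRestrict fun y => φ x * f x y) 0) s μ := by
  have hf_cont : ∀ x ∈ s, ContinuousOn (f x) K := fun x hx =>
    hf.comp (Continuous.prodMk_right x).continuousOn fun _ hy => ⟨hx, hy⟩
  have hf_int : IntegrableOn (fun x => mkD (K.domRestrict (f x)) 0) s μ :=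
    ⟨aeStronglyMeasurable_restrict_mkD_restrict_of_uncurry hs f 0 hf,
      hasFiniteIntegral_mkD_restrict_of_bound f 0 (ae_restrict_of_forall_mem hs hf_cont) g hg.2
        (ae_restrict_of_forall_mem hs hfg)⟩
  refine (hf_int.bdd_smul C hφm hφ).congr (ae_restrict_of_forall_mem hs fun x hx => ?_)
  have hmul_cont : ContinuousOn (fun y => φ x * f x y) K := continuousOn_const.mul (hf_cont x hx)
  ext y
  simp only [Pi.smul_apply', ContinuousMap.smul_apply, smul_eq_mul,
    mkD_apply_of_continuousOn (hf_cont x hx), mkD_apply_of_continuousOn hmul_cont]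

end ContinuousMap

section CStarAlgebra

variable {A : Type*} [CStarAlgebra A] {a : A}

lemma sq_add_sq_ne_zero_of_mem_spectrum (ha : IsSelfAdjoint a) {t : ℝ} (ht : t ≠ 0) {z : ℂ}
    (hz : z ∈ spectrum ℂ a) : (t : ℂ) ^ 2 + z ^ 2 ≠ 0 := by
  rw [ha.mem_spectrum_eq_re hz]
  exact_mod_cast (by positivity : t ^ 2 + z.re ^ 2 ≠ 0)

lemma continuousOn_uncurry_cauchyKernel (ha : IsSelfAdjoint a) :
    ContinuousOn (Function.uncurry cauchyKernel) (Ioi 0 ×ˢ spectrum ℂ a) :=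
  ContinuousOn.div (by fun_prop) (by fun_prop) fun p hp =>
    sq_add_sq_ne_zero_of_mem_spectrum ha (ne_of_gt hp.1) hp.2

lemma continuousOn_cauchyKernel (ha : IsSelfAdjoint a) {t : ℝ} (ht : t ≠ 0) :
    ContinuousOn (cauchyKernel t) (spectrum ℂ a) :=
  ContinuousOn.div (by fun_prop) (by fun_prop) fun _ hz =>
    sq_add_sq_ne_zero_of_mem_spectrum ha ht hz

lemma cfc_cauchyKernel (ha : IsSelfAdjoint a) {t : ℝ} (ht : t ≠ 0) :
    cfc (cauchyKernel t) a = a * Ring.inverse ((t : ℂ) ^ 2 • 1 + a ^ 2) := by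
  have hden : ∀ z ∈ spectrum ℂ a, (t : ℂ) ^ 2 + z ^ 2 ≠ 0 := fun z hz =>
    sq_add_sq_ne_zero_of_mem_spectrum ha ht hz
  calc cfc (cauchyKernel t) a = cfc (fun z : ℂ => z * ((t : ℂ) ^ 2 + z ^ 2)⁻¹) a := rfl
    _ = a * Ring.inverse (cfc (fun z : ℂ => (t : ℂ) ^ 2 + z ^ 2) a) := by
      rw [cfc_mul (fun z => z) _ a (by fun_prop) (ContinuousOn.fun_inv₀ (by fun_prop) hden),
        cfc_id' ℂ a, cfc_inv _ a hden]
    _ = a * Ring.inverse ((t : ℂ) ^ 2 • 1 + a ^ 2) := by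
      rw [cfc_const_add _ _ a, cfc_pow_id a 2, Algebra.algebraMap_eq_smul_one]

lemma cfc_const_mul_cauchyKernel (ha : IsSelfAdjoint a) {t : ℝ} (ht : t ≠ 0) (c : ℂ) :
    cfc (fun z => c * cauchyKernel t z) a =
      c • (a * Ring.inverse ((t : ℂ) ^ 2 • 1 + a ^ 2)) := by
  rw [cfc_const_mul c _ a (continuousOn_cauchyKernel ha ht), cfc_cauchyKernel ha ht]

variable {φ : ℝ → ℂ}

lemma integrableOn_mkD_domRestrict_mul_cauchyKernel (ha : IsSelfAdjoint a)
    (h0 : ¬ AccPt 0 (𝓟 (spectrum ℂ a)))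
    (hφm : AEStronglyMeasurable φ (volume.restrict (Ioi 0)))
    (hφ : ∀ᵐ t ∂volume.restrict (Ioi 0), ‖φ t‖ ≤ 1) :
    IntegrableOn (fun t => ContinuousMap.mkD
      ((spectrum ℂ a).domRestrict fun z => φ t * cauchyKernel t z) 0) (Ioi 0) := by
  obtain ⟨g, hg, hbound⟩ :=
    exists_integrable_forall_norm_div_sq_add_sq_le (spectrum.isBounded (𝕜 := ℂ) a) h0
  refine integrableOn_mkD_domRestrict_mul measurableSet_Ioi hφm hφ
    (continuousOn_uncurry_cauchyKernel ha) hg.integrableOn fun t _ z hz => ?_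
  have hz_re := ha.mem_spectrum_eq_re hz
  rw [hz_re, norm_cauchyKernel_ofReal, ← hz_re]
  exact hbound t z hz

theorem integrableOn_smul_mul_inverse_sq_add_sq (ha : IsSelfAdjoint a)
    (h0 : ¬ AccPt 0 (𝓟 (spectrum ℂ a)))
    (hφm : AEStronglyMeasurable φ (volume.restrict (Ioi 0)))
    (hφ : ∀ᵐ t ∂volume.restrict (Ioi 0), ‖φ t‖ ≤ 1) :
    IntegrableOn (fun t => φ t • (a * Ring.inverse ((t : ℂ) ^ 2 • 1 + a ^ 2))) (Ioi 0) :=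
  (integrableOn_cfc' _ a (integrableOn_mkD_domRestrict_mul_cauchyKernel ha h0 hφm hφ)).congr_fun
    (fun t ht => cfc_const_mul_cauchyKernel ha (ne_of_gt ht) (φ t)) measurableSet_Ioi

theorem norm_integral_smul_mul_inverse_sq_add_sq_le (ha : IsSelfAdjoint a)
    (h0 : ¬ AccPt 0 (𝓟 (spectrum ℂ a)))
    (hφm : AEStronglyMeasurable φ (volume.restrict (Ioi 0)))
    (hφ : ∀ᵐ t ∂volume.restrict (Ioi 0), ‖φ t‖ ≤ 1) :
    ‖∫ t in Ioi (0 : ℝ), φ t • (a * Ring.inverse ((t : ℂ) ^ 2 • 1 + a ^ 2))‖ ≤ Real.pi / 2 := by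
  have hcont : ∀ t ∈ Ioi (0 : ℝ),
      ContinuousOn (fun z => φ t * cauchyKernel t z) (spectrum ℂ a) := fun t ht =>
    continuousOn_const.mul (continuousOn_cauchyKernel ha (ne_of_gt ht))
  rw [← setIntegral_congr_fun measurableSet_Ioi fun t ht =>
      cfc_const_mul_cauchyKernel ha (ne_of_gt ht) (φ t),
    ← cfc_setIntegral' _ a (ae_restrict_of_forall_mem measurableSet_Ioi hcont)
      (integrableOn_mkD_domRestrict_mul_cauchyKernel ha h0 hφm hφ)]
  refine norm_cfc_le (by positivity) fun z hz => ?_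
  rw [ha.mem_spectrum_eq_re hz]
  exact norm_integral_mul_cauchyKernel_le hφ z.re

end CStarAlgebra

section Matrix

open scoped Matrix.Norms.L2Operator

variable {m n X : Type*} [Fintype m] [Fintype n] [DecidableEq n] [MeasurableSpace X]
  {μ : Measure X} {F : X → Matrix m n ℂ}

lemma integrable_matrix_apply (hF : Integrable F μ) (i : m) (j : n) :
    Integrable (fun x => F x i j) μ :=
  (entryLinearMap ℂ ℂ i j).toContinuousLinearMap.integrable_comp hF

lemma integral_matrix_apply_s8 (hF : Integrable F μ) (i : m) (j : n) :
    ∫ x, F x i j ∂μ = (∫ x, F x ∂μ) i j :=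
  (entryLinearMap ℂ ℂ i j).toContinuousLinearMap.integral_comp_comm hF

end Matrix

open scoped Matrix.Norms.L2Operator in
theorem integral_operator_norm_le_one_general {n : Type*} [Fintype n] [DecidableEq n]
    {Q : Matrix n n ℂ} (hQ : Q.IsHermitian) {φ : ℝ → ℂ}
    (hφm : AEStronglyMeasurable φ (volume.restrict (Ioi 0)))
    (hφ : ∀ᵐ t ∂volume.restrict (Ioi 0), ‖φ t‖ ≤ 1) :
    (∀ i j, IntegrableOn
        (fun t : ℝ => (Q * ((t : ℂ) ^ 2 • 1 + Q ^ 2)⁻¹ : Matrix n n ℂ) i j * φ t) (Ioi 0)) ∧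
      ‖toEuclideanCLM (𝕜 := ℂ) (n := n) (of fun i j => (2 / Real.pi : ℂ) *
        ∫ t in Ioi (0 : ℝ), (Q * ((t : ℂ) ^ 2 • 1 + Q ^ 2)⁻¹ : Matrix n n ℂ) i j * φ t)‖ ≤ 1 := by
  have h0 : ¬ AccPt 0 (𝓟 (spectrum ℂ Q)) := fun h =>
    Set.Infinite.of_accPt h Q.finite_spectrum
  have h_int := integrableOn_smul_mul_inverse_sq_add_sq hQ.isSelfAdjoint h0 hφm hφ
  have hle := norm_integral_smul_mul_inverse_sq_add_sq_le hQ.isSelfAdjoint h0 hφm hφ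
  simp only [← nonsing_inv_eq_ringInverse] at h_int hle
  have hentry : ∀ (i j : n) (t : ℝ), (Q * ((t : ℂ) ^ 2 • 1 + Q ^ 2)⁻¹ : Matrix n n ℂ) i j * φ t =
      (φ t • (Q * ((t : ℂ) ^ 2 • 1 + Q ^ 2)⁻¹) : Matrix n n ℂ) i j := fun i j t => mul_comm _ _
  simp only [hentry]
  refine ⟨integrable_matrix_apply h_int, ?_⟩
  simp only [integral_matrix_apply_s8 h_int]
  calc ‖(2 / Real.pi : ℂ) • ∫ t in Ioi (0 : ℝ), φ t • (Q * ((t : ℂ) ^ 2 • 1 + Q ^ 2)⁻¹)‖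
    _ = 2 / Real.pi * ‖∫ t in Ioi (0 : ℝ), φ t • (Q * ((t : ℂ) ^ 2 • 1 + Q ^ 2)⁻¹)‖ := by
        rw [norm_smul]
        simp [abs_of_pos Real.pi_pos]
    _ ≤ 2 / Real.pi * (Real.pi / 2) := by gcongr
    _ = 1 := by field_simp

/-- For an invertible Hermitian `Q` and measurable `φ : [0,∞) → [0,1]`, the
matrix `X = (2/π) ∫₀^∞ Q (t² I + Q²)⁻¹ φ(t) dt` is well defined (the integrand is
integrable entrywise) and satisfies `‖X‖₂ ≤ 1`. -/
theorem integral_operator_norm_le_one {n : ℕ}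
    (Q : Matrix (Fin n) (Fin n) ℂ) (hQ : Q.IsHermitian) (hQinv : IsUnit Q.det)
    (φ : ℝ → ℝ) (hφm : Measurable φ) (hφ : ∀ t : ℝ, 0 ≤ t → 0 ≤ φ t ∧ φ t ≤ 1) :
    (∀ i j : Fin n, IntegrableOn
        (fun t : ℝ => (Q * (((t : ℂ) ^ 2) • 1 + Q ^ 2)⁻¹ : Matrix (Fin n) (Fin n) ℂ) i j *
          (φ t : ℂ)) (Set.Ioi 0)) ∧
      specNorm (Matrix.of fun i j : Fin n => (2 / Real.pi : ℂ) *
        ∫ t in Set.Ioi (0 : ℝ),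
          (Q * (((t : ℂ) ^ 2) • 1 + Q ^ 2)⁻¹ : Matrix (Fin n) (Fin n) ℂ) i j *
            (φ t : ℂ)) ≤ 1 :=
  integral_operator_norm_le_one_general hQ (by fun_prop)
    (ae_restrict_of_forall_mem measurableSet_Ioi fun t ht => by
      simpa [abs_of_nonneg (hφ t (le_of_lt ht)).1] using (hφ t (le_of_lt ht)).2)
end
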